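/- arXiv:2506.06258 — 8 statements merged into one kernel-verified Lean document; each statement's English description precedes it below -/
import Mathlib

section
/- Consider the Eisenberg–Gale program: minimize \sum_{i=1}^n -w_i \log t_i over x \in \mathbb{R}^{n\times m} and t \in \mathbb{R}^n subject to \sum_{i=1}^n x_{ij} = 1 for every j, t_i = \sum_{j=1}^m u_{ij} x_{ij} for every i, x_{ij} \ge 0 for all i,j, and t_i > 0 for all i. If (x, t) and (\tilde{x}, \tilde{t}) are both optimal solutions of this program, then t = \tilde{t}; that is, the optimal t-component is unique. -/
/-!
The feasible set is convex and the objective `∑ i, -(w i) * log (t i)` is strictly convex in `t`,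
since every `w i` is positive and `log` is strictly concave on `(0, ∞)`. If two optimal solutions
had different `t`-components, their midpoint would be feasible with an objective value strictly
below the average of the two optimal values, contradicting optimality.
-/

open BigOperators

noncomputable section

/-- Feasibility for the Eisenberg–Gale program. -/
def EGFeasible (n m : ℕ) (u : Fin n → Fin m → ℝ)
    (x : Fin n → Fin m → ℝ) (t : Fin n → ℝ) : Prop :=
  (∀ j, ∑ i, x i j = 1) ∧
  (∀ i, t i = ∑ j, u i j * x i j) ∧
  (∀ i j, 0 ≤ x i j) ∧
  (∀ i, 0 < t i)

/-- Objective of the Eisenberg–Gale program (in minimization form). -/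
def EGObj (n : ℕ) (w : Fin n → ℝ) (t : Fin n → ℝ) : ℝ :=
  ∑ i, -(w i) * Real.log (t i)

/-- Optimality for the Eisenberg–Gale program. -/
def EGOptimal (n m : ℕ) (u : Fin n → Fin m → ℝ) (w : Fin n → ℝ)
    (x : Fin n → Fin m → ℝ) (t : Fin n → ℝ) : Prop :=
  EGFeasible n m u x t ∧
  ∀ x' t', EGFeasible n m u x' t' → EGObj n w t ≤ EGObj n w t'

/-- The optimal `t`-component of the Eisenberg–Gale program is unique. -/
theorem eg_optimal_t_unique (n m : ℕ) (u : Fin n → Fin m → ℝ) (w : Fin n → ℝ)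
    (hu : ∀ i j, 0 ≤ u i j)
    (hrow : ∀ i, ∃ j, 0 < u i j)
    (hcol : ∀ j, ∃ i, 0 < u i j)
    (hw : ∀ i, 0 < w i)
    (x : Fin n → Fin m → ℝ) (t : Fin n → ℝ)
    (x' : Fin n → Fin m → ℝ) (t' : Fin n → ℝ)
    (hopt : EGOptimal n m u w x t) (hopt' : EGOptimal n m u w x' t') :
    t = t' := by
  obtain ⟨⟨hx1, hx2, hx3, hx4⟩, hmin⟩ := hopt
  obtain ⟨⟨hy1, hy2, hy3, hy4⟩, hmin'⟩ := hopt'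
  by_contra hne
  obtain ⟨k, hk⟩ := Function.ne_iff.mp hne
  have hfeas : EGFeasible n m u (fun i j => (1 / 2 : ℝ) * x i j + (1 / 2) * x' i j)
      (fun i => (1 / 2 : ℝ) * t i + (1 / 2) * t' i) := by
    refine ⟨fun j => ?_, fun i => ?_, fun i j => ?_, fun i => ?_⟩
    · rw [Finset.sum_add_distrib, ← Finset.mul_sum, ← Finset.mul_sum, hx1, hy1]
      norm_num
    · simp only
      rw [hx2, hy2, Finset.mul_sum, Finset.mul_sum, ← Finset.sum_add_distrib]
      exact Finset.sum_congr rfl fun j _ => by ring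
    · have := hx3 i j
      have := hy3 i j
      positivity
    · have := hx4 i
      have := hy4 i
      positivity
  have hlt : EGObj n w (fun i => (1 / 2 : ℝ) * t i + (1 / 2) * t' i)
      < (1 / 2) * EGObj n w t + (1 / 2) * EGObj n w t' := by
    unfold EGObj
    rw [Finset.mul_sum, Finset.mul_sum, ← Finset.sum_add_distrib]
    refine Finset.sum_lt_sum (fun i _ => ?_) ⟨k, Finset.mem_univ k, ?_⟩
    · have h := strictConcaveOn_log_Ioi.concaveOn.2 (hx4 i) (hy4 i)
        (by norm_num : (0 : ℝ) ≤ 1 / 2) (by norm_num : (0 : ℝ) ≤ 1 / 2) (by norm_num)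
      simp only [smul_eq_mul] at h
      linarith [mul_le_mul_of_nonneg_left h (hw i).le]
    · have h := strictConcaveOn_log_Ioi.2 (hx4 k) (hy4 k) hk
        (by norm_num : (0 : ℝ) < 1 / 2) (by norm_num : (0 : ℝ) < 1 / 2) (by norm_num)
      simp only [smul_eq_mul] at h
      linarith [mul_lt_mul_of_pos_left h (hw k)]
  linarith [hmin _ _ hfeas, hmin' _ _ hfeas]

end
end

section
/- Suppose (x, t, p, y) satisfies the KKT system of the Fisher market problem. Then \sum_{j=1}^m p_j = \sum_{i=1}^n w_i, and p_j > 0 for every j. -/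
/-!
By complementary slackness, `x i j * p j = u i j * x i j * y i`. Summing over all `i, j`, the left
side gives `∑ j, p j` because each good is fully allocated, and the right side gives
`∑ i, t i * y i = ∑ i, w i`. For positivity, `t i ≥ 0` and `t i * y i = w i > 0` force `y i > 0`,
and then `p j ≥ u i j * y i > 0` for any consumer `i` with `u i j > 0`.
-/

open BigOperators

/-- The KKT system of the Fisher market problem. -/
def FisherKKT (n m : ℕ) (u : Fin n → Fin m → ℝ) (w : Fin n → ℝ)
    (x : Fin n → Fin m → ℝ) (t : Fin n → ℝ) (p : Fin m → ℝ) (y : Fin n → ℝ) : Prop :=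
  (∀ i, t i * y i = w i) ∧
  (∀ i j, x i j * (p j - u i j * y i) = 0) ∧
  (∀ i j, 0 ≤ p j - u i j * y i) ∧
  (∀ j, ∑ i, x i j = 1) ∧
  (∀ i, t i = ∑ j, u i j * x i j) ∧
  (∀ i j, 0 ≤ x i j)

/-- At any KKT point of the Fisher market problem, the prices sum to the total
budget and every price is positive. -/
theorem fisher_kkt_price_sum_pos (n m : ℕ) (u : Fin n → Fin m → ℝ) (w : Fin n → ℝ)
    (hu : ∀ i j, 0 ≤ u i j)
    (hrow : ∀ i, ∃ j, 0 < u i j)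
    (hcol : ∀ j, ∃ i, 0 < u i j)
    (hw : ∀ i, 0 < w i)
    (x : Fin n → Fin m → ℝ) (t : Fin n → ℝ) (p : Fin m → ℝ) (y : Fin n → ℝ)
    (hkkt : FisherKKT n m u w x t p y) :
    (∑ j, p j = ∑ i, w i) ∧ ∀ j, 0 < p j := by
  obtain ⟨hty, hcomp, hdual, hsum, ht, hx⟩ := hkkt
  refine ⟨?_, fun j => ?_⟩
  · calc ∑ j, p j = ∑ j, ∑ i, x i j * p j := by
          simp_rw [← Finset.sum_mul, hsum, one_mul]
      _ = ∑ j, ∑ i, u i j * x i j * y i := by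
          refine Finset.sum_congr rfl fun j _ => Finset.sum_congr rfl fun i _ => ?_
          linear_combination hcomp i j
      _ = ∑ i, ∑ j, u i j * x i j * y i := Finset.sum_comm
      _ = ∑ i, w i := by
          simp_rw [← Finset.sum_mul, ← ht, hty]
  · obtain ⟨i, hi⟩ := hcol j
    have ht0 : 0 ≤ t i := by
      rw [ht]
      exact Finset.sum_nonneg fun k _ => mul_nonneg (hu i k) (hx i k)
    have hy : 0 < y i := pos_of_mul_pos_right ((hty i).symm ▸ hw i) ht0
    linarith [hdual i j, mul_pos hi hy]
end

section
/- Let u_1, \dots, u_m \ge 0 with u_{j_0} > 0 for at least one index j_0, let \tau > 0, w > 0, and c \in \mathbb{R}^m. Define \phi(s) = s - \sum_{j=1}^m u_j \max(c_j + \tau w / s, 0) for s > 0. Then \phi is strictly increasing on (0, \infty), \phi(s) \to -\infty as s \to 0^+, \phi(s) \to +\infty as s \to +\infty, and \phi has a unique root s^\star > 0. -/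
/-!
Each term `uⱼ max(cⱼ + τw/s, 0)` is nonincreasing in `s > 0`, so `φ` is the identity plus a
nondecreasing function, hence strictly increasing. Near `0⁺`, discarding all terms but one with
`uⱼ > 0` bounds `φ` above by `s - uⱼ (cⱼ + τw/s)`, which tends to `-∞`. For `s ≥ 1` the sum is at
most its value at `s = 1`, so `φ` tends to `+∞`. The root comes from the intermediate value
theorem on `(0, ∞)`, and it is unique by strict monotonicity.
-/

open BigOperators Filter

/-- The function `φ(s) = s - ∑ⱼ uⱼ max(cⱼ + τw/s, 0)` is strictly increasing on
`(0, ∞)`, tends to `-∞` as `s → 0⁺`, tends to `+∞` as `s → +∞`, and has a unique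
positive root. -/
theorem phi_strict_mono_unique_root (m : ℕ) (u c : Fin m → ℝ) (τ w : ℝ)
    (hu : ∀ j, 0 ≤ u j) (hj : ∃ j, 0 < u j) (hτ : 0 < τ) (hw : 0 < w) :
    let φ : ℝ → ℝ := fun s => s - ∑ j, u j * max (c j + τ * w / s) 0
    StrictMonoOn φ (Set.Ioi 0) ∧
    Tendsto φ (nhdsWithin 0 (Set.Ioi 0)) atBot ∧
    Tendsto φ atTop atTop ∧
    (∃! s : ℝ, 0 < s ∧ φ s = 0) := by
  intro φ
  have hτw : 0 < τ * w := mul_pos hτ hw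
  have hanti : ∀ s t : ℝ, 0 < s → s ≤ t →
      ∑ j, u j * max (c j + τ * w / t) 0 ≤ ∑ j, u j * max (c j + τ * w / s) 0 := by
    intro s t hs hst
    refine Finset.sum_le_sum fun j _ => mul_le_mul_of_nonneg_left ?_ (hu j)
    exact max_le_max_right 0
      (add_le_add_right (div_le_div_of_nonneg_left hτw.le hs hst) (c j))
  have hmono : StrictMonoOn φ (Set.Ioi 0) := by
    intro s hs t _ hst
    have := hanti s t hs hst.le
    simp only [φ]
    linarith
  have hbot : Tendsto φ (nhdsWithin 0 (Set.Ioi 0)) atBot := by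
    obtain ⟨k, hk⟩ := hj
    have h1 : Tendsto (fun s : ℝ => u k * (c k + τ * w * s⁻¹))
        (nhdsWithin 0 (Set.Ioi 0)) atTop :=
      (tendsto_atTop_add_const_left _ _
        (tendsto_inv_nhdsGT_zero.const_mul_atTop hτw)).const_mul_atTop hk
    have h2 : Tendsto (fun s : ℝ => s) (nhdsWithin 0 (Set.Ioi 0)) (nhds 0) :=
      tendsto_nhdsWithin_of_tendsto_nhds tendsto_id
    refine tendsto_atBot_mono (fun s => ?_) (h2.add_atBot (tendsto_neg_atTop_atBot.comp h1))
    have h3 : u k * max (c k + τ * w / s) 0 ≤ ∑ j, u j * max (c j + τ * w / s) 0 :=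
      Finset.single_le_sum (f := fun j => u j * max (c j + τ * w / s) 0)
        (fun j _ => mul_nonneg (hu j) (le_max_right _ _)) (Finset.mem_univ k)
    have h4 : u k * (c k + τ * w / s) ≤ u k * max (c k + τ * w / s) 0 :=
      mul_le_mul_of_nonneg_left (le_max_left _ _) hk.le
    simp only [φ, Function.comp_apply, ← div_eq_mul_inv]
    linarith
  have htop : Tendsto φ atTop atTop := by
    refine tendsto_atTop_mono' atTop ?_ (tendsto_atTop_add_const_right atTop
      (-∑ j, u j * max (c j + τ * w / 1) 0) tendsto_id)
    filter_upwards [eventually_ge_atTop (1 : ℝ)] with s hs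
    have := hanti 1 s one_pos hs
    simp only [φ, id]
    linarith
  refine ⟨hmono, hbot, htop, ?_⟩
  have hcont : ContinuousOn φ (Set.Ioi 0) := by
    refine continuousOn_id.sub (continuousOn_finsetSum _ fun j _ => ?_)
    refine continuousOn_const.mul (ContinuousOn.sup (continuousOn_const.add ?_) continuousOn_const)
    exact continuousOn_const.div continuousOn_id fun s hs => ne_of_gt hs
  obtain ⟨a, ha, ha0⟩ := ((hbot.eventually_le_atBot 0).and self_mem_nhdsWithin).exists
  obtain ⟨b, hb, hb0⟩ := ((htop.eventually_ge_atTop 0).and (eventually_gt_atTop 0)).exists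
  obtain ⟨s, hs, hs0⟩ := isPreconnected_Ioi.intermediate_value ha0 hb0 hcont ⟨ha, hb⟩
  exact ⟨s, ⟨hs, hs0⟩, fun t ht => hmono.injOn ht.1 hs (ht.2.trans hs0.symm)⟩
end

section
/- Let \mathcal{Z}^\star denote the set of pairs (x, p) \in \mathbb{R}^{n\times m} \times \mathbb{R}^m satisfying: x_{ij} \ge 0 for all i,j; \sum_{i=1}^n x_{ij} = 1 for all j; p_j - \frac{u_{ij} w_i}{\sum_{j'=1}^m u_{ij'} x_{ij'}} \ge 0 for all i,j; and x_{ij}(p_j - \frac{u_{ij} w_i}{\sum_{j'=1}^m u_{ij'} x_{ij'}}) = 0 for all i,j. For \xi > 0 define the scaled KKT residual \mathcal{F}_\xi(x, p) as the vector with blocks (x_{ij} - \max(x_{ij} - \frac{1}{\xi}(p_j - \frac{u_{ij} w_i}{\sum_{j'} u_{ij'} x_{ij'}}), 0))_{ij}, (\min(p_j - \frac{u_{ij} w_i}{\sum_{j'} u_{ij'} x_{ij'}}, 0))_{ij}, and (\sum_{i=1}^n x_{ij} - 1)_j. Then for every R > 0 there exists \gamma > 0 such that \|\mathcal{F}_\xi(x,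 p)\| \ge \gamma \cdot \mathrm{dist}((x, p), \mathcal{Z}^\star) for every (x, p) with x \ge 0, \sum_{j=1}^m u_{ij} x_{ij} > 0 for all i, and \|(x, p)\| \le R. -/
/-!
Write `S i = ∑ j, u i j * x i j` for the utilities, `g i j = p j - u i j * w i / S i` for the reduced
costs and `r` for the residual norm.

If `r ≤ 1` on a bounded set, then `u w / S ≤ p + 1` keeps every `S i` away from zero
(`utility_lower_bound`), and on the remaining compact set the residual is continuous. So either it
has a positive lower bound, in which case the estimate is trivial because distances are bounded
(`far_error_bound`), or it vanishes somewhere (`resid_dichotomy`). In the latter case there is an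
equilibrium `(x₀, p₀)` with positive utilities `S₀`. The KKT set as defined may also contain points
with some `S i = 0`, where division by zero returns `0`; they only decrease the distance, and the
argument never uses them except to bound it.

Near such an equilibrium, put `σ = ‖S - S₀‖`.
* Allocations `x' ≥ 0` with column sums `1` and utilities `S₀` are equilibria for `p₀`
  (`kkt_of_same_utility`). They form a polyhedron, and a Hoffman bound (`hoffman_nonneg`) gives one
  with `‖x - x'‖ = O(r + σ)`.
* Since `p₀ j = max_i u i j * w i / S₀ i`, also `‖p - p₀‖ = O(r + σ)` (`price_bound`).
* Monotonicity of the KKT system, with the curvature of the logarithm, gives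
  `σ² = O(r (r + σ))` (`compl_ineq`, `monotone_identity`), hence `σ = O(r)` (`quad_bound`).

Together these bound the distance by a multiple of `r` (`local_error_bound`).
-/

open BigOperators

noncomputable section

/-- The space of primal-dual pairs `(x, p)` of the Fisher market problem. -/
abbrev FisherPair (n m : ℕ) := (Fin n → Fin m → ℝ) × (Fin m → ℝ)

/-- The KKT system of the PDHCG formulation of the Fisher market problem. -/
def FisherKKT2 (n m : ℕ) (u : Fin n → Fin m → ℝ) (w : Fin n → ℝ)
    (z : FisherPair n m) : Prop :=
  (∀ i j, 0 ≤ z.1 i j) ∧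
  (∀ j, ∑ i, z.1 i j = 1) ∧
  (∀ i j, 0 ≤ z.2 j - u i j * w i / ∑ j', u i j' * z.1 i j') ∧
  (∀ i j, z.1 i j * (z.2 j - u i j * w i / ∑ j', u i j' * z.1 i j') = 0)

/-- The Euclidean norm of a pair `(x, p)`. -/
def pairNorm (n m : ℕ) (z : FisherPair n m) : ℝ :=
  Real.sqrt ((∑ i, ∑ j, (z.1 i j) ^ 2) + (∑ j, (z.2 j) ^ 2))

/-- The Euclidean distance from a pair to a set of pairs. -/
def pairDist (n m : ℕ) (z : FisherPair n m) (S : Set (FisherPair n m)) : ℝ :=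
  sInf {d : ℝ | ∃ z' ∈ S, d = pairNorm n m (z - z')}

/-- The Euclidean norm of the scaled KKT residual `𝓕_ξ(x, p)`. -/
def FResidNorm2 (n m : ℕ) (u : Fin n → Fin m → ℝ) (w : Fin n → ℝ) (ξ : ℝ)
    (z : FisherPair n m) : ℝ :=
  Real.sqrt
    ((∑ i, ∑ j,
        (z.1 i j -
          max (z.1 i j - ξ⁻¹ * (z.2 j - u i j * w i / ∑ j', u i j' * z.1 i j')) 0) ^ 2) +
     (∑ i, ∑ j, (min (z.2 j - u i j * w i / ∑ j', u i j' * z.1 i j') 0) ^ 2) +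
     (∑ j, ((∑ i, z.1 i j) - 1) ^ 2))

/-! ### A Hoffman bound -/

/-- On the cone of vectors whose signs are compatible with a fixed pattern `s`, a linear map with
no nonzero kernel vector in that cone is bounded below: minimise `‖A y‖` over the unit sphere of
the cone, which is compact. -/
lemma sign_cone_bound {ι F : Type*} [Fintype ι] [NormedAddCommGroup F] [NormedSpace ℝ F]
    (A : (ι → ℝ) →ₗ[ℝ] F) (s : ι → ℝ)
    (h0 : ∀ v : ι → ℝ, (∀ i, 0 ≤ v i * s i ∧ (s i = 0 → v i = 0)) → A v = 0 → v = 0) :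
    ∃ C : ℝ, 0 < C ∧
      ∀ y : ι → ℝ, (∀ i, 0 ≤ y i * s i ∧ (s i = 0 → y i = 0)) → ‖y‖ ≤ C * ‖A y‖ := by
  have hA : Continuous A := A.continuous_of_finiteDimensional
  set K : Set (ι → ℝ) := Metric.sphere 0 1 ∩
    {y | ∀ i, 0 ≤ y i * s i ∧ (s i = 0 → y i = 0)} with hK
  have hKc : IsCompact K := by
    refine (isCompact_sphere 0 1).inter_right ?_
    simp only [Set.ofPred_forall, Set.ofPred_and]
    refine isClosed_iInter fun i => IsClosed.inter ?_ (isClosed_iInter fun _ => ?_)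
    · exact isClosed_le continuous_const (by fun_prop)
    · exact isClosed_eq (by fun_prop) continuous_const
  have hpos : ∃ c : ℝ, 0 < c ∧ ∀ y ∈ K, c ≤ ‖A y‖ := by
    rcases K.eq_empty_or_nonempty with he | hne
    · exact ⟨1, one_pos, by simp [he]⟩
    · obtain ⟨y, hy, hmin⟩ := hKc.exists_isMinOn hne (hA.norm.continuousOn)
      refine ⟨‖A y‖, norm_pos_iff.2 fun h => ?_, fun z hz => hmin hz⟩
      have := h0 y hy.2 h
      have h1 : ‖y‖ = 1 := by simpa using hy.1
      simp [this] at h1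
  obtain ⟨c, hc, hcK⟩ := hpos
  refine ⟨c⁻¹, inv_pos.2 hc, fun y hy => ?_⟩
  rcases eq_or_ne y 0 with rfl | hy0
  · simp
  have hn : 0 < ‖y‖ := norm_pos_iff.2 hy0
  have := hcK (‖y‖⁻¹ • y) ⟨by simp [norm_smul, hn.ne'], fun i => ⟨?_, fun h => ?_⟩⟩
  · rw [map_smul, norm_smul, norm_inv, norm_norm] at this
    rw [inv_mul_eq_div, le_div_iff₀ hc]
    rw [inv_mul_eq_div, le_div_iff₀ hn] at this
    linarith
  · simp only [Pi.smul_apply, smul_eq_mul, mul_assoc]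
    exact mul_nonneg (inv_nonneg.2 hn.le) (hy i).1
  · simp [(hy i).2 h]

/-- A Hoffman-type error bound for the polyhedra `{x ≥ 0, A x = A x₀}`, uniform in `x₀`. The point
`x'` is an `ℓ¹`-nearest point of the polyhedron to `x`. Minimality forbids nonzero kernel vectors
sign-compatible with `x - x'`, since moving along one would get closer to `x`; the bound then
comes from `sign_cone_bound` and the finiteness of the set of sign patterns. -/
lemma hoffman_nonneg {ι F : Type*} [Fintype ι] [NormedAddCommGroup F] [NormedSpace ℝ F]
    (A : (ι → ℝ) →ₗ[ℝ] F) :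
    ∃ C : ℝ, 0 < C ∧ ∀ x x₀ : ι → ℝ, (∀ i, 0 ≤ x i) → (∀ i, 0 ≤ x₀ i) →
      ∃ x' : ι → ℝ, (∀ i, 0 ≤ x' i) ∧ A x' = A x₀ ∧ ‖x - x'‖ ≤ C * ‖A x - A x₀‖ := by
  classical
  have hA : Continuous A := A.continuous_of_finiteDimensional
  have key : ∀ s : ι → SignType, ∃ C : ℝ, 0 < C ∧
      ((∀ v : ι → ℝ, (∀ i, 0 ≤ v i * (s i : ℝ) ∧ ((s i : ℝ) = 0 → v i = 0)) → A v = 0 → v = 0) →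
      ∀ y : ι → ℝ, (∀ i, 0 ≤ y i * (s i : ℝ) ∧ ((s i : ℝ) = 0 → y i = 0)) →
        ‖y‖ ≤ C * ‖A y‖) := by
    intro s
    by_cases h : ∀ v : ι → ℝ, (∀ i, 0 ≤ v i * (s i : ℝ) ∧ ((s i : ℝ) = 0 → v i = 0)) →
      A v = 0 → v = 0
    · obtain ⟨C, hC, hb⟩ := sign_cone_bound A (fun i => (s i : ℝ)) h
      exact ⟨C, hC, fun _ => hb⟩
    · exact ⟨1, one_pos, fun h' => absurd h' h⟩
  choose c hc hcb using key
  refine ⟨∑ s, c s, Finset.sum_pos (fun s _ => hc s) ⟨fun _ => 0, Finset.mem_univ _⟩, ?_⟩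
  intro x x₀ hx hx₀
  set f : (ι → ℝ) → ℝ := fun y => ∑ i, |x i - y i| with hf
  have hfc : Continuous f := by fun_prop
  set P : Set (ι → ℝ) := {y | (∀ i, 0 ≤ y i) ∧ A y = A x₀} with hP
  have hPc : IsClosed P := by
    simp only [hP, Set.ofPred_and, Set.ofPred_forall]
    exact (isClosed_iInter fun i => isClosed_le continuous_const (by fun_prop)).inter
      (isClosed_eq hA continuous_const)
  -- minimise the distance over the bounded part of `P` that is at least as near to `x` as `x₀`
  have hcomp : IsCompact (P ∩ {y | f y ≤ f x₀}) := by
    refine Metric.isCompact_of_isClosed_isBounded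
      (hPc.inter (isClosed_le hfc continuous_const)) ?_
    refine (Metric.isBounded_closedBall (x := x) (r := f x₀)).subset fun y hy => ?_
    rw [Metric.mem_closedBall, dist_comm, dist_eq_norm]
    refine (pi_norm_le_iff_of_nonneg (Finset.sum_nonneg fun i _ => abs_nonneg _)).2 fun i => ?_
    exact (Finset.single_le_sum (f := fun i => |x i - y i|) (fun i _ => abs_nonneg _)
      (Finset.mem_univ i)).trans hy.2
  obtain ⟨x', ⟨⟨hx'0, hx'A⟩, hx'f⟩, hmin⟩ :=
    hcomp.exists_isMinOn ⟨x₀, ⟨hx₀, rfl⟩, le_refl (f x₀)⟩ hfc.continuousOn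
  refine ⟨x', hx'0, hx'A, ?_⟩
  set s : ι → SignType := fun i => SignType.sign (x i - x' i) with hs
  have hs0 : ∀ i, (s i : ℝ) = 0 ↔ x i - x' i = 0 := by
    intro i
    rcases lt_trichotomy (x i - x' i) 0 with h | h | h
    · simp [hs, sign_neg h, h.ne]
    · simp [hs, h]
    · simp [hs, sign_pos h, h.ne']
  have hker : ∀ v : ι → ℝ, (∀ i, 0 ≤ v i * (s i : ℝ) ∧ ((s i : ℝ) = 0 → v i = 0)) →
      A v = 0 → v = 0 := by
    intro v hv hAv
    -- a step so short that no coordinate of `x - x'` changes sign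
    have hev : ∀ᶠ t : ℝ in nhdsWithin 0 (Set.Ioi 0),
        0 < t ∧ ∀ i, v i = 0 ∨ t * |v i| ≤ |x i - x' i| := by
      refine (eventually_mem_nhdsWithin).and (Filter.eventually_all.2 fun i => ?_)
      by_cases h0 : v i = 0
      · exact Filter.Eventually.of_forall fun _ => Or.inl h0
      · have hpos : 0 < |x i - x' i| := abs_pos.2 fun h => h0 ((hv i).2 ((hs0 i).2 h))
        have : Filter.Tendsto (fun t : ℝ => t * |v i|) (nhds 0) (nhds 0) := by
          have : Continuous fun t : ℝ => t * |v i| := by fun_prop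
          simpa using this.tendsto 0
        exact ((this.eventually_le_const hpos).filter_mono nhdsWithin_le_nhds).mono
          fun t ht => Or.inr ht
    obtain ⟨t, ht, htv⟩ := hev.exists
    have hcoord : ∀ i, 0 ≤ x' i + t * v i ∧
        |x i - (x' i + t * v i)| = |x i - x' i| - t * |v i| := by
      intro i
      rcases htv i with h | h
      · simp [h, hx'0 i]
      have hvi := (hv i).1
      rcases lt_trichotomy (x i - x' i) 0 with hy | hy | hy
      · have hle : v i ≤ 0 := by
          simp [hs, sign_neg hy] at hvi; exact hvi
        rw [abs_of_nonpos hle, abs_of_neg hy] at h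
        rw [abs_of_nonpos hle, abs_of_neg hy, abs_of_nonpos (by linarith)]
        exact ⟨by linarith [hx i], by ring⟩
      · have : v i = 0 := (hv i).2 ((hs0 i).2 hy)
        simp [this, hx'0 i]
      · have hle : 0 ≤ v i := by
          simp [hs, sign_pos hy] at hvi; exact hvi
        rw [abs_of_nonneg hle, abs_of_pos hy] at h
        rw [abs_of_nonneg hle, abs_of_pos hy, abs_of_nonneg (by linarith)]
        exact ⟨add_nonneg (hx'0 i) (by positivity), by ring⟩
    have hfeq : f (x' + t • v) = f x' - t * ∑ i, |v i| := by
      simp only [hf, Pi.add_apply, Pi.smul_apply, smul_eq_mul]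
      rw [Finset.mul_sum, ← Finset.sum_sub_distrib]
      exact Finset.sum_congr rfl fun i _ => (hcoord i).2
    have hvn : 0 ≤ ∑ i, |v i| := Finset.sum_nonneg fun i _ => abs_nonneg _
    have hle : f x' ≤ f (x' + t • v) := by
      refine hmin ⟨⟨fun i => (hcoord i).1, by simp [hAv, hx'A]⟩, ?_⟩
      have : f x' ≤ f x₀ := hx'f
      show f (x' + t • v) ≤ f x₀
      rw [hfeq]
      nlinarith
    have hz : ∑ i, |v i| = 0 := by
      rw [hfeq] at hle
      nlinarith
    funext i
    exact abs_eq_zero.1 ((Finset.sum_eq_zero_iff_of_nonneg fun i _ => abs_nonneg (v i)).1 hz i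
      (Finset.mem_univ i))
  have hb := hcb s hker (x - x') fun i => ⟨?_, fun h => (hs0 i).1 h⟩
  · rw [map_sub, hx'A] at hb
    exact hb.trans (mul_le_mul_of_nonneg_right
      (Finset.single_le_sum (f := c) (fun s _ => (hc s).le) (Finset.mem_univ s)) (norm_nonneg _))
  · simp only [Pi.sub_apply, hs]
    rw [mul_comm, sign_mul_self]
    exact abs_nonneg _

/-! ### Norms and residual components -/

lemma abs_fst_le_pairNorm (n m : ℕ) (z : FisherPair n m) (i : Fin n) (j : Fin m) :
    |z.1 i j| ≤ pairNorm n m z := by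
  refine Real.abs_le_sqrt ?_
  have h1 := Finset.single_le_sum (f := fun j => (z.1 i j) ^ 2) (fun j _ => sq_nonneg _)
    (Finset.mem_univ j)
  have h2 := Finset.single_le_sum (f := fun i => ∑ j, (z.1 i j) ^ 2)
    (fun i _ => Finset.sum_nonneg fun j _ => sq_nonneg _) (Finset.mem_univ i)
  have h3 : 0 ≤ ∑ j, (z.2 j) ^ 2 := Finset.sum_nonneg fun j _ => sq_nonneg _
  linarith

lemma abs_snd_le_pairNorm (n m : ℕ) (z : FisherPair n m) (j : Fin m) :
    |z.2 j| ≤ pairNorm n m z := by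
  refine Real.abs_le_sqrt ?_
  have h1 := Finset.single_le_sum (f := fun j => (z.2 j) ^ 2) (fun j _ => sq_nonneg _)
    (Finset.mem_univ j)
  have h3 : 0 ≤ ∑ i, ∑ j, (z.1 i j) ^ 2 :=
    Finset.sum_nonneg fun i _ => Finset.sum_nonneg fun j _ => sq_nonneg _
  linarith

lemma norm_le_pairNorm (n m : ℕ) (z : FisherPair n m) : ‖z‖ ≤ pairNorm n m z := by
  have h0 : 0 ≤ pairNorm n m z := Real.sqrt_nonneg _
  refine norm_prod_le_iff.2 ⟨?_, ?_⟩
  · exact (pi_norm_le_iff_of_nonneg h0).2 fun i => (pi_norm_le_iff_of_nonneg h0).2 fun j =>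
      abs_fst_le_pairNorm n m z i j
  · exact (pi_norm_le_iff_of_nonneg h0).2 fun j => abs_snd_le_pairNorm n m z j

lemma pairNorm_le_norm (n m : ℕ) (z : FisherPair n m) :
    pairNorm n m z ≤ Real.sqrt (n * m + m) * ‖z‖ := by
  have hx : ∀ i j, (z.1 i j) ^ 2 ≤ ‖z‖ ^ 2 := fun i j => by
    rw [← sq_abs]
    exact pow_le_pow_left₀ (abs_nonneg _)
      (((norm_le_pi_norm (z.1 i) j).trans (norm_le_pi_norm z.1 i)).trans (norm_fst_le z)) 2
  have hp : ∀ j, (z.2 j) ^ 2 ≤ ‖z‖ ^ 2 := fun j => by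
    rw [← sq_abs]
    exact pow_le_pow_left₀ (abs_nonneg _) ((norm_le_pi_norm z.2 j).trans (norm_snd_le z)) 2
  have h1 : ∑ i, ∑ j, (z.1 i j) ^ 2 ≤ ∑ _i : Fin n, ∑ _j : Fin m, ‖z‖ ^ 2 :=
    Finset.sum_le_sum fun i _ => Finset.sum_le_sum fun j _ => hx i j
  have h2 : ∑ j, (z.2 j) ^ 2 ≤ ∑ _j : Fin m, ‖z‖ ^ 2 := Finset.sum_le_sum fun j _ => hp j
  simp only [Finset.sum_const, Finset.card_univ, Fintype.card_fin, nsmul_eq_mul] at h1 h2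
  rw [pairNorm, ← Real.sqrt_sq (norm_nonneg z), ← Real.sqrt_mul (by positivity)]
  exact Real.sqrt_le_sqrt (by linarith)

lemma pairDist_le (n m : ℕ) (z z' : FisherPair n m) (S : Set (FisherPair n m)) (h : z' ∈ S) :
    pairDist n m z S ≤ Real.sqrt (n * m + m) * ‖z - z'‖ := by
  refine le_trans (csInf_le ⟨0, ?_⟩ ⟨z', h, rfl⟩) (pairNorm_le_norm n m _)
  rintro d ⟨y, _, rfl⟩
  exact Real.sqrt_nonneg _

lemma sub_max_eq_min (x a : ℝ) : x - max (x - a) 0 = min x a := by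
  rcases le_total x a with h | h
  · rw [max_eq_right (by linarith), min_eq_left h]; ring
  · rw [max_eq_left (by linarith), min_eq_right h]; ring

/-- Every component of the residual is bounded by its Euclidean norm. -/
lemma resid_components (n m : ℕ) (u : Fin n → Fin m → ℝ) (w : Fin n → ℝ) (ξ : ℝ)
    (z : FisherPair n m) :
    (∀ i j, |min (z.1 i j) (ξ⁻¹ * (z.2 j - u i j * w i / ∑ j', u i j' * z.1 i j'))| ≤
      FResidNorm2 n m u w ξ z) ∧
    (∀ i j, -FResidNorm2 n m u w ξ z ≤ z.2 j - u i j * w i / ∑ j', u i j' * z.1 i j') ∧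
    (∀ j, |(∑ i, z.1 i j) - 1| ≤ FResidNorm2 n m u w ξ z) := by
  have hA : ∀ f : Fin n → Fin m → ℝ, 0 ≤ ∑ i, ∑ j, (f i j) ^ 2 := fun f =>
    Finset.sum_nonneg fun i _ => Finset.sum_nonneg fun j _ => sq_nonneg _
  have hB : ∀ f : Fin n → Fin m → ℝ, ∀ i j, (f i j) ^ 2 ≤ ∑ i, ∑ j, (f i j) ^ 2 := by
    intro f i j
    exact (Finset.single_le_sum (f := fun j => (f i j) ^ 2) (fun j _ => sq_nonneg _)
      (Finset.mem_univ j)).trans (Finset.single_le_sum (f := fun i => ∑ j, (f i j) ^ 2)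
        (fun i _ => Finset.sum_nonneg fun j _ => sq_nonneg _) (Finset.mem_univ i))
  have hC : 0 ≤ ∑ j, ((∑ i, z.1 i j) - 1) ^ 2 := Finset.sum_nonneg fun j _ => sq_nonneg _
  have h1 := hA fun i j => z.1 i j -
    max (z.1 i j - ξ⁻¹ * (z.2 j - u i j * w i / ∑ j', u i j' * z.1 i j')) 0
  have h2 := hA fun i j => min (z.2 j - u i j * w i / ∑ j', u i j' * z.1 i j') 0
  refine ⟨fun i j => ?_, fun i j => ?_, fun j => ?_⟩
  · rw [← sub_max_eq_min]
    refine Real.abs_le_sqrt ?_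
    have := hB (fun i j => z.1 i j -
      max (z.1 i j - ξ⁻¹ * (z.2 j - u i j * w i / ∑ j', u i j' * z.1 i j')) 0) i j
    linarith
  · have h3 : |min (z.2 j - u i j * w i / ∑ j', u i j' * z.1 i j') 0| ≤
        FResidNorm2 n m u w ξ z := by
      refine Real.abs_le_sqrt ?_
      have := hB (fun i j => min (z.2 j - u i j * w i / ∑ j', u i j' * z.1 i j') 0) i j
      linarith
    exact (abs_le.1 h3).1.trans (min_le_left _ _)
  · refine Real.abs_le_sqrt ?_
    have := Finset.single_le_sum (f := fun j => ((∑ i, z.1 i j) - 1) ^ 2)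
      (fun j _ => sq_nonneg _) (Finset.mem_univ j)
    linarith

lemma kkt_of_resid_eq_zero (n m : ℕ) (u : Fin n → Fin m → ℝ) (w : Fin n → ℝ) (ξ : ℝ) (hξ : 0 < ξ)
    (z : FisherPair n m) (hx : ∀ i j, 0 ≤ z.1 i j) (h : FResidNorm2 n m u w ξ z = 0) :
    FisherKKT2 n m u w z := by
  obtain ⟨h1, h2, h3⟩ := resid_components n m u w ξ z
  rw [h] at h1 h2 h3
  refine ⟨hx, fun j => ?_, fun i j => by simpa using h2 i j, fun i j => ?_⟩
  · linarith [abs_nonpos_iff.1 (h3 j)]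
  · have h4 := abs_nonpos_iff.1 (h1 i j)
    rcases min_choice (z.1 i j)
      (ξ⁻¹ * (z.2 j - u i j * w i / ∑ j', u i j' * z.1 i j')) with h5 | h5
    · rw [h4] at h5
      rw [← h5, zero_mul]
    · rw [h4] at h5
      rcases mul_eq_zero.1 h5.symm with h6 | h6
      · exact absurd h6 (inv_pos.2 hξ).ne'
      · rw [h6, mul_zero]

/-! ### Monotonicity, prices and the equilibrium polyhedron -/

/-- One coordinate of the perturbed monotonicity inequality: with `a = min x (g / ξ)` the pair
`(x - a, g - ξ a)` is nonnegative and complementary, as is `(x', g')`. -/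
lemma compl_ineq (ξ x g x' g' r : ℝ) (hξ : 0 < ξ) (hx' : 0 ≤ x') (hg' : 0 ≤ g')
    (hc : x' * g' = 0) (ha : |min x (ξ⁻¹ * g)| ≤ r) :
    (x - x') * (g - g') ≤ r * (|g - g'| + ξ * |x - x'|) := by
  set a := min x (ξ⁻¹ * g) with hadef
  have h1 : 0 ≤ x - a := sub_nonneg.2 (min_le_left _ _)
  have hg : ξ * (ξ⁻¹ * g) = g := mul_inv_cancel_left₀ hξ.ne' g
  have h2 : 0 ≤ g - ξ * a := by
    have := mul_le_mul_of_nonneg_left (min_le_right x (ξ⁻¹ * g)) hξ.le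
    rw [hg] at this
    exact sub_nonneg.2 this
  have h3 : (x - a) * (g - ξ * a) = 0 := by
    rcases min_choice x (ξ⁻¹ * g) with h | h
    · rw [hadef, h]; ring
    · rw [hadef, h, hg]; ring
  have h4 := mul_nonneg h1 hg'
  have h5 := mul_nonneg hx' h2
  have h6 : a * (g - g') ≤ r * |g - g'| :=
    (le_abs_self _).trans (by rw [abs_mul]; exact mul_le_mul_of_nonneg_right ha (abs_nonneg _))
  have h7 : a * (x - x') ≤ r * |x - x'| :=
    (le_abs_self _).trans (by rw [abs_mul]; exact mul_le_mul_of_nonneg_right ha (abs_nonneg _))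
  have h8 := mul_le_mul_of_nonneg_left h7 hξ.le
  have h9 : 0 ≤ ξ * a ^ 2 := by positivity
  nlinarith

/-- Summing `(x - x') (g - g')` over all coordinates, where `g = p - u w / S` is the reduced cost:
the prices pair with the market-clearing violation, and the concave part of the objective
contributes the curvature term `∑ w (S - S')² / (S S')`. -/
lemma monotone_identity (n m : ℕ) (u x x' : Fin n → Fin m → ℝ) (w S S' : Fin n → ℝ)
    (p p' : Fin m → ℝ) (hS : ∀ i, 0 < S i) (hS' : ∀ i, 0 < S' i)
    (hx : ∀ i, ∑ j, u i j * x i j = S i) (hx' : ∀ i, ∑ j, u i j * x' i j = S' i)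
    (h1 : ∀ j, ∑ i, x' i j = 1) :
    ∑ i, ∑ j, (x i j - x' i j) * ((p j - u i j * w i / S i) - (p' j - u i j * w i / S' i)) =
      ∑ j, ((∑ i, x i j) - 1) * (p j - p' j) + ∑ i, w i * (S i - S' i) ^ 2 / (S i * S' i) := by
  have e1 : ∑ j, ((∑ i, x i j) - 1) * (p j - p' j) =
      ∑ i, ∑ j, (x i j - x' i j) * (p j - p' j) := by
    rw [Finset.sum_comm]
    refine Finset.sum_congr rfl fun j _ => ?_
    rw [← Finset.sum_mul, Finset.sum_sub_distrib, h1 j]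
  have e2 : ∀ i, w i * (S i - S' i) ^ 2 / (S i * S' i) =
      ∑ j, (x i j - x' i j) * (u i j * w i / S' i - u i j * w i / S i) := by
    intro i
    have : ∑ j, (x i j - x' i j) * (u i j * w i / S' i - u i j * w i / S i) =
        (∑ j, u i j * x i j - ∑ j, u i j * x' i j) * (w i / S' i - w i / S i) := by
      rw [← Finset.sum_sub_distrib, Finset.sum_mul]
      exact Finset.sum_congr rfl fun j _ => by ring
    rw [this, hx i, hx' i]
    have := (hS i).ne'
    have := (hS' i).ne'
    field_simp
  rw [e1, Finset.sum_congr rfl fun i _ => e2 i, ← Finset.sum_add_distrib]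
  refine Finset.sum_congr rfl fun i _ => ?_
  rw [← Finset.sum_add_distrib]
  exact Finset.sum_congr rfl fun j _ => by ring

/-- The map sending an allocation to its column sums and utilities. -/
def demandMap (n m : ℕ) (u : Fin n → Fin m → ℝ) :
    (Fin n × Fin m → ℝ) →ₗ[ℝ] (Fin m → ℝ) × (Fin n → ℝ) where
  toFun x := (fun j => ∑ i, x (i, j), fun i => ∑ j, u i j * x (i, j))
  map_add' x y := by
    ext k <;> simp [Finset.sum_add_distrib, mul_add]
  map_smul' c x := by
    ext k <;> simp [Finset.mul_sum, mul_left_comm]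

/-- Every nonnegative clearing allocation with the utilities of an equilibrium is again an
equilibrium for the same prices: the sum of its complementarity products depends only on column
sums and utilities, hence is zero, and each product is nonnegative. -/
lemma kkt_of_same_utility (n m : ℕ) (u x₀ x : Fin n → Fin m → ℝ) (w : Fin n → ℝ) (p₀ : Fin m → ℝ)
    (h0 : FisherKKT2 n m u w (x₀, p₀)) (hx : ∀ i j, 0 ≤ x i j) (h1 : ∀ j, ∑ i, x i j = 1)
    (hS : ∀ i, ∑ j, u i j * x i j = ∑ j, u i j * x₀ i j) :
    FisherKKT2 n m u w (x, p₀) := by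
  obtain ⟨_, h01, h0g, h0c⟩ := h0
  simp only at h01 h0g h0c
  have hval : ∀ y : Fin n → Fin m → ℝ, (∀ j, ∑ i, y i j = 1) →
      (∀ i, ∑ j, u i j * y i j = ∑ j, u i j * x₀ i j) →
      ∑ i, ∑ j, y i j * (p₀ j - u i j * w i / ∑ j', u i j' * x₀ i j') =
        ∑ j, p₀ j - ∑ i, (∑ j, u i j * x₀ i j) * (w i / ∑ j', u i j' * x₀ i j') := by
    intro y hy1 hyS
    have e1 : ∑ j, p₀ j = ∑ i, ∑ j, y i j * p₀ j := by
      rw [Finset.sum_comm]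
      exact Finset.sum_congr rfl fun j _ => by rw [← Finset.sum_mul, hy1 j, one_mul]
    rw [e1, ← Finset.sum_sub_distrib]
    refine Finset.sum_congr rfl fun i _ => ?_
    rw [← hyS i, Finset.sum_mul, ← Finset.sum_sub_distrib]
    exact Finset.sum_congr rfl fun j _ => by ring
  have hzero : ∑ i, ∑ j, x i j * (p₀ j - u i j * w i / ∑ j', u i j' * x₀ i j') = 0 := by
    rw [hval x h1 hS, ← hval x₀ h01 fun _ => rfl]
    exact Finset.sum_eq_zero fun i _ => Finset.sum_eq_zero fun j _ => h0c i j
  have hterm : ∀ i j, 0 ≤ x i j * (p₀ j - u i j * w i / ∑ j', u i j' * x₀ i j') :=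
    fun i j => mul_nonneg (hx i j) (h0g i j)
  refine ⟨hx, h1, fun i j => ?_, fun i j => ?_⟩
  · simp only [hS i]; exact h0g i j
  · simp only [hS i]
    have := (Finset.sum_eq_zero_iff_of_nonneg
      fun i _ => Finset.sum_nonneg fun j _ => hterm i j).1 hzero i (Finset.mem_univ i)
    exact (Finset.sum_eq_zero_iff_of_nonneg fun j _ => hterm i j).1 this j (Finset.mem_univ j)

/-- Prices are controlled by the residual `r` and by the perturbation `δ` of the marginal utilities
`q = u w / S`: the equilibrium price is `p₀ j = max_i q₀ i j`, and some consumer buys more than `r`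
of good `j`, which keeps `p j` within `ξ r` of `q i j` for that consumer. -/
lemma price_bound (n m : ℕ) (x x₀ q q₀ : Fin n → Fin m → ℝ) (p p₀ : Fin m → ℝ) (ξ r δ : ℝ)
    (hξ : 0 < ξ) (hr : 0 ≤ r) (hr1 : (n + 1) * r < 1)
    (h01 : ∀ j, ∑ i, x₀ i j = 1) (h0g : ∀ i j, 0 ≤ p₀ j - q₀ i j)
    (h0c : ∀ i j, x₀ i j * (p₀ j - q₀ i j) = 0)
    (hq : ∀ i j, |q i j - q₀ i j| ≤ δ)
    (ha : ∀ i j, |min (x i j) (ξ⁻¹ * (p j - q i j))| ≤ r)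
    (hg : ∀ i j, -r ≤ p j - q i j) (he : ∀ j, |(∑ i, x i j) - 1| ≤ r) (j : Fin m) :
    |p j - p₀ j| ≤ δ + (1 + ξ) * r := by
  have hξr : 0 ≤ ξ * r := by positivity
  rw [abs_le]
  constructor
  · obtain ⟨i, -, hi⟩ : ∃ i ∈ Finset.univ, x₀ i j ≠ 0 := by
      refine Finset.exists_ne_zero_of_sum_ne_zero ?_
      rw [h01 j]; exact one_ne_zero
    have h1 : p₀ j - q₀ i j = 0 := (mul_eq_zero.1 (h0c i j)).resolve_left hi
    have h2 := (abs_le.1 (hq i j)).1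
    linarith [hg i j]
  · obtain ⟨i, hi⟩ : ∃ i, r < x i j := by
      by_contra! hcon
      have h1 : ∑ i, x i j ≤ ∑ _i : Fin n, r := Finset.sum_le_sum fun i _ => hcon i
      simp only [Finset.sum_const, Finset.card_univ, Fintype.card_fin, nsmul_eq_mul] at h1
      have h2 := (abs_le.1 (he j)).1
      linarith
    have h1 : ξ⁻¹ * (p j - q i j) ≤ r := by
      rcases min_le_iff.1 ((abs_le.1 (ha i j)).2) with h | h
      · exact absurd h (not_le.2 hi)
      · exact h
    rw [inv_mul_le_iff₀ hξ] at h1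
    have h2 := (abs_le.1 (hq i j)).2
    linarith [h0g i j]

/-- If `σ² ≤ K r (r + σ)` then `σ` is at most a multiple of `r`. -/
lemma quad_bound (K r σ : ℝ) (hK : 0 ≤ K) (hr : 0 ≤ r) (hσ : 0 ≤ σ)
    (h : σ ^ 2 ≤ K * (r * (r + σ))) : σ ≤ (1 + 2 * K) * r := by
  by_contra! hcon
  have hKr : 0 ≤ K * r := by positivity
  have hpos : 0 < σ := lt_of_le_of_lt (by positivity) hcon
  have h1 : r ≤ σ := by nlinarith
  have h2 : K * (r * (r + σ)) ≤ 2 * K * r * σ := by nlinarith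
  have h3 : σ * σ ≤ (2 * K * r) * σ := by nlinarith
  have h4 := le_of_mul_le_mul_right h3 hpos
  nlinarith

/-! ### Error bound near an equilibrium -/

/-- The error bound near a genuine equilibrium `(x₀, p₀)`. Write `σ = ‖S - S₀‖` for the deviation
of the utilities. `price_bound` and `hoffman_nonneg` give a distance of order `r + σ`, and
monotonicity gives `σ² = O(r (r + σ))`, whence `σ = O(r)`. -/
lemma local_error_bound (n m : ℕ) (u x₀ : Fin n → Fin m → ℝ) (w s : Fin n → ℝ) (p₀ : Fin m → ℝ)
    (ξ R : ℝ) (hu : ∀ i j, 0 ≤ u i j) (hw : ∀ i, 0 < w i) (hξ : 0 < ξ) (hR : 0 ≤ R)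
    (hs : ∀ i, 0 < s i) (h0 : FisherKKT2 n m u w (x₀, p₀))
    (hS₀ : ∀ i, 0 < ∑ j, u i j * x₀ i j) :
    ∃ C : ℝ, 0 < C ∧ ∀ (r : ℝ) (x : Fin n → Fin m → ℝ) (p : Fin m → ℝ), 0 ≤ r →
      (n + 1) * r < 1 → (∀ i j, 0 ≤ x i j) → (∀ i j, x i j ≤ R) →
      (∀ i, s i ≤ ∑ j, u i j * x i j) →
      (∀ i j, |min (x i j) (ξ⁻¹ * (p j - u i j * w i / ∑ j', u i j' * x i j'))| ≤ r) →
      (∀ i j, -r ≤ p j - u i j * w i / ∑ j', u i j' * x i j') →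
      (∀ j, |(∑ i, x i j) - 1| ≤ r) →
      ∃ x' : Fin n → Fin m → ℝ, FisherKKT2 n m u w (x', p₀) ∧
        ‖((x, p) : FisherPair n m) - (x', p₀)‖ ≤ C * r := by
  obtain ⟨H, hH, hhoff⟩ := hoffman_nonneg (demandMap n m u)
  set S₀ : Fin n → ℝ := fun i => ∑ j, u i j * x₀ i j with hS₀def
  have hS₀' : ∀ i, 0 < S₀ i := hS₀
  -- Lipschitz constant of the marginal utilities as functions of the utilities `S ≥ s`
  set L : ℝ := ∑ i, ∑ j, u i j * w i / (s i * S₀ i) with hL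
  have hLterm : ∀ i j, 0 ≤ u i j * w i / (s i * S₀ i) := fun i j =>
    div_nonneg (mul_nonneg (hu i j) (hw i).le) (mul_pos (hs i) (hS₀' i)).le
  have hL0 : 0 ≤ L := Finset.sum_nonneg fun i _ => Finset.sum_nonneg fun j _ => hLterm i j
  have hLle : ∀ i j, u i j * w i / (s i * S₀ i) ≤ L := fun i j =>
    (Finset.single_le_sum (f := fun j => u i j * w i / (s i * S₀ i)) (fun j _ => hLterm i j)
      (Finset.mem_univ j)).trans (Finset.single_le_sum
        (f := fun i => ∑ j, u i j * w i / (s i * S₀ i))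
        (fun i _ => Finset.sum_nonneg fun j _ => hLterm i j) (Finset.mem_univ i))
  -- bound for the inverse curvature `S S₀ / w`
  set M : ℝ := ∑ i, (∑ j, u i j * R) * S₀ i / w i with hM
  have hMterm : ∀ i, 0 ≤ (∑ j, u i j * R) * S₀ i / w i := fun i =>
    div_nonneg (mul_nonneg (Finset.sum_nonneg fun j _ => mul_nonneg (hu i j) hR) (hS₀' i).le)
      (hw i).le
  have hM0 : 0 ≤ M := Finset.sum_nonneg fun i _ => hMterm i
  have hMle : ∀ i, (∑ j, u i j * R) * S₀ i / w i ≤ M := fun i =>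
    Finset.single_le_sum (f := fun i => (∑ j, u i j * R) * S₀ i / w i) (fun i _ => hMterm i)
      (Finset.mem_univ i)
  set T : ℝ := L + 1 + ξ with hT
  have hT0 : 0 < T := by positivity
  set Q : ℝ := n * (m * (T + L + ξ * H)) + m * T with hQ
  have hQ0 : 0 ≤ Q := by positivity
  refine ⟨(H + T) * (2 + 2 * (M * Q)), by positivity, ?_⟩
  intro r x p hr hr1 hx hxR hSs ha hg he
  set S : Fin n → ℝ := fun i => ∑ j, u i j * x i j with hSdef
  have hSpos : ∀ i, 0 < S i := fun i => (hs i).trans_le (hSs i)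
  set σ : ℝ := ‖S - S₀‖ with hσ
  have hσ0 : 0 ≤ σ := norm_nonneg _
  have hσi : ∀ i, |S i - S₀ i| ≤ σ := fun i => norm_le_pi_norm (S - S₀) i
  have hq : ∀ i j, |u i j * w i / S i - u i j * w i / S₀ i| ≤ L * σ := by
    intro i j
    have e : u i j * w i / S i - u i j * w i / S₀ i =
        u i j * w i / (S i * S₀ i) * (S₀ i - S i) := by
      have := (hSpos i).ne'
      have := (hS₀' i).ne'
      field_simp
    have h1 : u i j * w i / (S i * S₀ i) ≤ u i j * w i / (s i * S₀ i) :=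
      div_le_div_of_nonneg_left (mul_nonneg (hu i j) (hw i).le) (mul_pos (hs i) (hS₀' i))
        (mul_le_mul_of_nonneg_right (hSs i) (hS₀' i).le)
    have h2 : 0 ≤ u i j * w i / (S i * S₀ i) :=
      div_nonneg (mul_nonneg (hu i j) (hw i).le) (mul_pos (hSpos i) (hS₀' i)).le
    rw [e, abs_mul, abs_of_nonneg h2, abs_sub_comm]
    exact mul_le_mul (h1.trans (hLle i j)) (hσi i) (abs_nonneg _) hL0
  obtain ⟨h00, h01, h0g, h0c⟩ := id h0
  have hp : ∀ j, |p j - p₀ j| ≤ T * (r + σ) := by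
    intro j
    have := price_bound n m x x₀ (fun i j => u i j * w i / S i) (fun i j => u i j * w i / S₀ i)
      p p₀ ξ r (L * σ) hξ hr hr1 h01 h0g h0c hq ha hg he j
    refine this.trans ?_
    have e1 : 0 ≤ L * r := by positivity
    have e2 : 0 ≤ (1 + ξ) * σ := by positivity
    rw [hT]
    linarith
  obtain ⟨y, hy0, hyA, hyn⟩ := hhoff (fun k => x k.1 k.2) (fun k => x₀ k.1 k.2)
    (fun k => hx k.1 k.2) (fun k => h00 k.1 k.2)
  set x' : Fin n → Fin m → ℝ := fun i j => y (i, j) with hx'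
  have hx'1 : ∀ j, ∑ i, x' i j = 1 := fun j =>
    (congrFun (congrArg Prod.fst hyA) j).trans (h01 j)
  have hx'S : ∀ i, ∑ j, u i j * x' i j = S₀ i := fun i => congrFun (congrArg Prod.snd hyA) i
  have hK : FisherKKT2 n m u w (x', p₀) :=
    kkt_of_same_utility n m u x₀ x' w p₀ h0 (fun i j => hy0 (i, j)) hx'1 hx'S
  have hAn : ‖demandMap n m u (fun k => x k.1 k.2) - demandMap n m u (fun k => x₀ k.1 k.2)‖ ≤
      r + σ := by
    refine norm_prod_le_iff.2 ⟨?_, ?_⟩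
    · refine (pi_norm_le_iff_of_nonneg (by positivity)).2 fun j => ?_
      have h1 : |(∑ i, x i j) - ∑ i, x₀ i j| ≤ r := by
        have h01j : ∑ i, x₀ i j = 1 := h01 j
        rw [h01j]; exact he j
      exact h1.trans (by linarith)
    · refine (pi_norm_le_iff_of_nonneg (by positivity)).2 fun i => ?_
      have h1 : |S i - S₀ i| ≤ σ := hσi i
      exact h1.trans (by linarith)
  have hxx' : ∀ i j, |x i j - x' i j| ≤ H * (r + σ) := fun i j =>
    ((norm_le_pi_norm ((fun k : Fin n × Fin m => x k.1 k.2) - y) (i, j)).trans hyn).trans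
      (mul_le_mul_of_nonneg_left hAn hH.le)
  have hcoord : ∀ i j, (x i j - x' i j) *
      ((p j - u i j * w i / S i) - (p₀ j - u i j * w i / S₀ i)) ≤
      r * ((T + L + ξ * H) * (r + σ)) := by
    intro i j
    have hc := hK.2.2.2 i j
    simp only [hx'S i] at hc
    refine (compl_ineq ξ (x i j) (p j - u i j * w i / S i) (x' i j) (p₀ j - u i j * w i / S₀ i) r
      hξ (hy0 (i, j)) (h0g i j) hc (ha i j)).trans (mul_le_mul_of_nonneg_left ?_ hr)
    have h1 : |p j - u i j * w i / S i - (p₀ j - u i j * w i / S₀ i)| ≤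
        T * (r + σ) + L * σ := by
      have e : p j - u i j * w i / S i - (p₀ j - u i j * w i / S₀ i) =
        (p j - p₀ j) - (u i j * w i / S i - u i j * w i / S₀ i) := by ring
      rw [e]
      exact (abs_sub _ _).trans (add_le_add (hp j) (hq i j))
    have h2 := mul_le_mul_of_nonneg_left (hxx' i j) hξ.le
    have h3 : 0 ≤ L * r := by positivity
    linarith
  have hsum : ∑ i, w i * (S i - S₀ i) ^ 2 / (S i * S₀ i) ≤ Q * (r * (r + σ)) := by
    have e := monotone_identity n m u x x' w S S₀ p p₀ hSpos hS₀' (fun _ => rfl) hx'S hx'1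
    have h1 : ∑ i, ∑ j, (x i j - x' i j) *
        ((p j - u i j * w i / S i) - (p₀ j - u i j * w i / S₀ i)) ≤
        ∑ _i : Fin n, ∑ _j : Fin m, r * ((T + L + ξ * H) * (r + σ)) :=
      Finset.sum_le_sum fun i _ => Finset.sum_le_sum fun j _ => hcoord i j
    have h2 : ∑ j, -(((∑ i, x i j) - 1) * (p j - p₀ j)) ≤ ∑ _j : Fin m, r * (T * (r + σ)) := by
      refine Finset.sum_le_sum fun j _ => (neg_le_abs _).trans ?_
      rw [abs_mul]
      exact mul_le_mul (he j) (hp j) (abs_nonneg _) hr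
    rw [Finset.sum_neg_distrib] at h2
    simp only [Finset.sum_const, Finset.card_univ, Fintype.card_fin, nsmul_eq_mul] at h1 h2
    rw [hQ]
    linarith
  have hsq : ∀ i, (S i - S₀ i) ^ 2 ≤ M * Q * (r * (r + σ)) := by
    intro i
    have hti : ∀ i, 0 ≤ w i * (S i - S₀ i) ^ 2 / (S i * S₀ i) := fun i =>
      div_nonneg (mul_nonneg (hw i).le (sq_nonneg _)) (mul_pos (hSpos i) (hS₀' i)).le
    have h1 : w i * (S i - S₀ i) ^ 2 / (S i * S₀ i) ≤ Q * (r * (r + σ)) :=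
      (Finset.single_le_sum (f := fun i => w i * (S i - S₀ i) ^ 2 / (S i * S₀ i))
        (fun i _ => hti i) (Finset.mem_univ i)).trans hsum
    have h2 : S i * S₀ i / w i ≤ M := by
      refine le_trans ?_ (hMle i)
      have : S i ≤ ∑ j, u i j * R :=
        Finset.sum_le_sum fun j _ => mul_le_mul_of_nonneg_left (hxR i j) (hu i j)
      exact div_le_div_of_nonneg_right (mul_le_mul_of_nonneg_right this (hS₀' i).le) (hw i).le
    have e : (S i - S₀ i) ^ 2 =
        S i * S₀ i / w i * (w i * (S i - S₀ i) ^ 2 / (S i * S₀ i)) := by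
      have := (hSpos i).ne'
      have := (hS₀' i).ne'
      have := (hw i).ne'
      field_simp
    rw [e, mul_assoc]
    exact mul_le_mul h2 h1 (hti i) hM0
  have hσ2 : σ ^ 2 ≤ M * Q * (r * (r + σ)) := by
    have h1 : σ ≤ Real.sqrt (M * Q * (r * (r + σ))) :=
      (pi_norm_le_iff_of_nonneg (Real.sqrt_nonneg _)).2 fun i => Real.abs_le_sqrt (hsq i)
    exact (Real.le_sqrt hσ0 (by positivity)).1 h1
  have hσr := quad_bound (M * Q) r σ (by positivity) hr hσ0 hσ2
  have hD : r + σ ≤ (2 + 2 * (M * Q)) * r := by linarith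
  refine ⟨x', hK, ?_⟩
  have hfin : (H + T) * (r + σ) ≤ (H + T) * (2 + 2 * (M * Q)) * r := by
    rw [mul_assoc]
    exact mul_le_mul_of_nonneg_left hD (by positivity)
  refine le_trans ?_ hfin
  have hH' : 0 ≤ H * (r + σ) := by positivity
  have hT' : 0 ≤ T * (r + σ) := by positivity
  refine norm_prod_le_iff.2 ⟨?_, ?_⟩
  · exact (pi_norm_le_iff_of_nonneg (by positivity)).2 fun i =>
      (pi_norm_le_iff_of_nonneg (by positivity)).2 fun j => (hxx' i j).trans (by linarith)
  · exact (pi_norm_le_iff_of_nonneg (by positivity)).2 fun j => (hp j).trans (by linarith)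

/-! ### Globalisation by compactness -/

/-- Bounded points whose residual is bounded away from zero satisfy the error bound trivially. -/
lemma far_error_bound (n m : ℕ) (u : Fin n → Fin m → ℝ) (w : Fin n → ℝ) (ξ R δ : ℝ)
    (hne : ∃ z : FisherPair n m, FisherKKT2 n m u w z) (hR : 0 ≤ R) (hδ : 0 < δ) :
    ∃ γ : ℝ, 0 < γ ∧ ∀ z : FisherPair n m, pairNorm n m z ≤ R → δ ≤ FResidNorm2 n m u w ξ z →
      γ * pairDist n m z {z' | FisherKKT2 n m u w z'} ≤ FResidNorm2 n m u w ξ z := by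
  obtain ⟨z₀, hz₀⟩ := hne
  set B : ℝ := Real.sqrt (n * m + m) * (R + ‖z₀‖) + 1 with hB
  have hB0 : 0 < B := by positivity
  refine ⟨δ / B, div_pos hδ hB0, fun z hz hd => le_trans ?_ hd⟩
  have h1 : pairDist n m z {z' | FisherKKT2 n m u w z'} ≤ B := by
    refine (pairDist_le n m z z₀ _ hz₀).trans ?_
    have : ‖z - z₀‖ ≤ R + ‖z₀‖ :=
      (norm_sub_le _ _).trans (by linarith [norm_le_pairNorm n m z])
    have := mul_le_mul_of_nonneg_left this (Real.sqrt_nonneg ((n : ℝ) * m + m))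
    linarith
  calc δ / B * pairDist n m z {z' | FisherKKT2 n m u w z'} ≤ δ / B * B :=
        mul_le_mul_of_nonneg_left h1 (div_pos hδ hB0).le
    _ = δ := div_mul_cancel₀ δ hB0.ne'

/-- On bounded sets a residual of at most one keeps every utility away from zero, because
`u w / S ≤ p + 1`. -/
lemma utility_lower_bound (n m : ℕ) (u : Fin n → Fin m → ℝ) (w : Fin n → ℝ) (ξ R : ℝ)
    (hrow : ∀ i, ∃ j, 0 < u i j) (hw : ∀ i, 0 < w i) (hR : 0 < R) :
    ∃ s : Fin n → ℝ, (∀ i, 0 < s i) ∧ ∀ z : FisherPair n m,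
      (∀ i, 0 < ∑ j, u i j * z.1 i j) → pairNorm n m z ≤ R → FResidNorm2 n m u w ξ z ≤ 1 →
      ∀ i, s i ≤ ∑ j, u i j * z.1 i j := by
  choose k hk using hrow
  refine ⟨fun i => u i (k i) * w i / (R + 1),
    fun i => div_pos (mul_pos (hk i) (hw i)) (by linarith), fun z hS hz hr i => ?_⟩
  have h1 := (resid_components n m u w ξ z).2.1 i (k i)
  have h2 := (le_abs_self _).trans ((abs_snd_le_pairNorm n m z (k i)).trans hz)
  have h3 : u i (k i) * w i / ∑ j, u i j * z.1 i j ≤ R + 1 := by linarith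
  rw [div_le_iff₀ (hS i)] at h3
  show u i (k i) * w i / (R + 1) ≤ _
  rw [div_le_iff₀ (by linarith)]
  linarith

/-- By compactness, either the residual vanishes at some nonnegative allocation with utilities at
least `s`, or it has a positive lower bound on the bounded set of such points. -/
lemma resid_dichotomy (n m : ℕ) (u : Fin n → Fin m → ℝ) (w s : Fin n → ℝ) (ξ R : ℝ)
    (hs : ∀ i, 0 < s i) :
    (∃ z : FisherPair n m, (∀ i j, 0 ≤ z.1 i j) ∧ (∀ i, s i ≤ ∑ j, u i j * z.1 i j) ∧
      FResidNorm2 n m u w ξ z = 0) ∨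
    ∃ δ : ℝ, 0 < δ ∧ ∀ z : FisherPair n m, (∀ i j, 0 ≤ z.1 i j) →
      (∀ i, s i ≤ ∑ j, u i j * z.1 i j) → pairNorm n m z ≤ R → δ ≤ FResidNorm2 n m u w ξ z := by
  set K : Set (FisherPair n m) := {z | (∀ i j, 0 ≤ z.1 i j) ∧
    (∀ i, s i ≤ ∑ j, u i j * z.1 i j) ∧ pairNorm n m z ≤ R} with hK
  have hKc : IsCompact K := by
    refine Metric.isCompact_of_isClosed_isBounded ?_ ?_
    · simp only [hK, Set.ofPred_and, Set.ofPred_forall]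
      refine (isClosed_iInter fun i => isClosed_iInter fun j =>
        isClosed_le continuous_const (by fun_prop)).inter
        ((isClosed_iInter fun i => isClosed_le continuous_const (by fun_prop)).inter
        (isClosed_le ?_ continuous_const))
      unfold pairNorm
      fun_prop
    · refine (Metric.isBounded_closedBall (x := (0 : FisherPair n m)) (r := R)).subset
        fun z hz => ?_
      rw [mem_closedBall_zero_iff]
      exact (norm_le_pairNorm n m z).trans hz.2.2
  have hcont : ContinuousOn (FResidNorm2 n m u w ξ) K := by
    have hg : ∀ i j, ContinuousOn (fun z : FisherPair n m =>
        z.2 j - u i j * w i / ∑ j', u i j' * z.1 i j') K := by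
      intro i j
      refine ContinuousOn.sub (by fun_prop) (ContinuousOn.div (by fun_prop) (by fun_prop) ?_)
      exact fun z hz => ((hs i).trans_le (hz.2.1 i)).ne'
    unfold FResidNorm2
    refine Real.continuous_sqrt.comp_continuousOn ((ContinuousOn.add ?_ ?_).add (by fun_prop))
    · exact continuousOn_finsetSum _ fun i _ => continuousOn_finsetSum _ fun j _ => by
        have := hg i j
        fun_prop
    · exact continuousOn_finsetSum _ fun i _ => continuousOn_finsetSum _ fun j _ => by
        have := hg i j
        fun_prop
  rcases K.eq_empty_or_nonempty with hE | hne
  · refine Or.inr ⟨1, one_pos, fun z h1 h2 h3 => ?_⟩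
    have : z ∈ K := ⟨h1, h2, h3⟩
    simp [hE] at this
  · obtain ⟨z, hz, hmin⟩ := hKc.exists_isMinOn hne hcont
    rcases (Real.sqrt_nonneg _ : 0 ≤ FResidNorm2 n m u w ξ z).eq_or_lt with h | h
    · exact Or.inl ⟨z, hz.1, hz.2.1, h.symm⟩
    · exact Or.inr ⟨_, h, fun y h1 h2 h3 => hmin ⟨h1, h2, h3⟩⟩

/-- KKT error bound for the PDHCG formulation of the Fisher market problem: on every
bounded region, the norm of the scaled KKT residual dominates a positive multiple of
the distance to the KKT solution set. -/
theorem fisher_pdhcg_kkt_error_bound (n m : ℕ) (u : Fin n → Fin m → ℝ) (w : Fin n → ℝ)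
    (hu : ∀ i j, 0 ≤ u i j)
    (hrow : ∀ i, ∃ j, 0 < u i j)
    (hcol : ∀ j, ∃ i, 0 < u i j)
    (hw : ∀ i, 0 < w i)
    (hne : ∃ z : FisherPair n m, FisherKKT2 n m u w z)
    (ξ : ℝ) (hξ : 0 < ξ) :
    ∀ R : ℝ, 0 < R → ∃ γ : ℝ, 0 < γ ∧
      ∀ z : FisherPair n m, (∀ i j, 0 ≤ z.1 i j) → (∀ i, 0 < ∑ j, u i j * z.1 i j) →
        pairNorm n m z ≤ R →
        γ * pairDist n m z {z' | FisherKKT2 n m u w z'} ≤ FResidNorm2 n m u w ξ z := by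
  intro R hR
  obtain ⟨s, hs, hlow⟩ := utility_lower_bound n m u w ξ R hrow hw hR
  rcases resid_dichotomy n m u w s ξ R hs with ⟨z₀, hx₀, hS₀, hr₀⟩ | ⟨δ, hδ, hbd⟩
  · have hK := kkt_of_resid_eq_zero n m u w ξ hξ z₀ hx₀ hr₀
    obtain ⟨C, hC, hloc⟩ := local_error_bound n m u z₀.1 w s z₀.2 ξ R hu hw hξ hR.le hs hK
      fun i => (hs i).trans_le (hS₀ i)
    obtain ⟨γ, hγ, hfar⟩ := far_error_bound n m u w ξ R (1 / (n + 2)) hne hR.le (by positivity)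
    set N : ℝ := Real.sqrt (n * m + m) * C + 1 with hN
    have hN0 : 0 < N := by positivity
    refine ⟨min γ (1 / N), lt_min hγ (by positivity), fun z hx hS hz => ?_⟩
    have hdist : 0 ≤ pairDist n m z {z' | FisherKKT2 n m u w z'} := by
      refine Real.sInf_nonneg ?_
      rintro d ⟨y, _, rfl⟩
      exact Real.sqrt_nonneg _
    rcases le_or_gt (1 / ((n : ℝ) + 2)) (FResidNorm2 n m u w ξ z) with h | h
    · exact (mul_le_mul_of_nonneg_right (min_le_left _ _) hdist).trans (hfar z hz h)
    · have hr : 0 ≤ FResidNorm2 n m u w ξ z := Real.sqrt_nonneg _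
      rw [lt_div_iff₀ (by positivity)] at h
      have hn : 0 ≤ (n : ℝ) * FResidNorm2 n m u w ξ z := by positivity
      obtain ⟨h1, h2, h3⟩ := resid_components n m u w ξ z
      obtain ⟨x', hK', hnorm⟩ := hloc (FResidNorm2 n m u w ξ z) z.1 z.2 hr (by linarith) hx
        (fun i j => (le_abs_self _).trans ((abs_fst_le_pairNorm n m z i j).trans hz))
        (hlow z hS hz (by linarith)) h1 h2 h3
      refine (mul_le_mul_of_nonneg_right (min_le_right _ _) hdist).trans ?_
      rw [one_div, inv_mul_le_iff₀ hN0]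
      refine (pairDist_le n m z (x', z₀.2) _ hK').trans ?_
      have := mul_le_mul_of_nonneg_left hnorm (Real.sqrt_nonneg ((n : ℝ) * m + m))
      rw [hN]
      change Real.sqrt (n * m + m) * ‖z - (x', z₀.2)‖ ≤ _ at this
      linarith
  · obtain ⟨γ, hγ, hfar⟩ := far_error_bound n m u w ξ R (min δ 1) hne hR.le (lt_min hδ one_pos)
    refine ⟨γ, hγ, fun z hx hS hz => hfar z hz ?_⟩
    rcases le_or_gt (FResidNorm2 n m u w ξ z) 1 with h | h
    · exact (min_le_left _ _).trans (hbd z hx (hlow z hS hz h) hz)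
    · exact (min_le_right _ _).trans h.le

end
end

section
/- For every \xi > 0 and every bounded set S \subseteq \mathbb{R}^{n\times m} \times \mathbb{R}^m there exists \alpha > 0 such that for every z \in \mathcal{Z} \cap S and every saddle point z^\star \in \mathcal{Z}^\star, the smoothed duality gap satisfies G_\xi(z; z^\star) \ge \alpha \cdot \mathrm{dist}(z, \mathcal{Z}^\star)^2. -/
/-!
Fix a saddle point `(x⋆, p⋆)` and write `Uᵢ = ∑ⱼ uᵢⱼ x⋆ᵢⱼ`. First-order optimality gives the KKT
system: markets clear, the slacks `sᵢⱼ = p⋆ⱼ - wᵢ uᵢⱼ / Uᵢ` are nonnegative, and `x⋆ᵢⱼ sᵢⱼ = 0`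
(`saddle_clears`, `saddle_price_ge`, `saddle_complementary`). With `tᵢ = (∑ⱼ uᵢⱼ xᵢⱼ) / Uᵢ` they yield
the identity (`lagr_sub_saddle`)
`ℒ(x, p⋆) - ℒ(x⋆, p⋆) = ∑ᵢ wᵢ (tᵢ - 1 - log tᵢ) + ∑ᵢⱼ xᵢⱼ sᵢⱼ`.
Hence all saddle points share the utilities `Uᵢ` and the prices `p⋆` (`saddle_unique`), and `𝒵⋆` is
the polyhedron of nonnegative allocations that clear the markets with utilities `Uᵢ`, times `{p⋆}`.

The supremum defining `G_ξ` is finite (`smoothedGap_bddAbove`), so it is bounded below by its value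
at any test point, and the two components of the test point can be chosen separately.
* `p̂ = p⋆ + r / ξ`, where `rⱼ = ∑ᵢ xᵢⱼ - 1`, gains `|r|² / (2ξ)`. Together with the identity above and
  `t - 1 - log t ≥ (t - 1)² / (2 (1 + T))` for `t ≤ T`, this controls the residuals of the linear
  system defining the polyhedron.
* `x̂ᵢⱼ = x⋆ᵢⱼ (1 + ε (p⋆ⱼ - pⱼ))` gains at least `(ε / 2) |p - p⋆|²` for small `ε`, by complementarity
  and market clearing (`dual_growth`).

A Hoffman-type error bound (`hoffman`, `allocation_error_bound`) turns the residuals into the distance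
from `x` to the polyhedron. It is proved by taking, in the box spanned by `0` and `d`, an
`ℓ¹`-minimal `d'` with `M d' = M d`: the face of the orthant carrying `d'` meets `ker M` only in `0`,
so `‖d'‖ ≤ C ‖M d'‖` on that face by compactness, and there are finitely many faces.
-/

open BigOperators

noncomputable section

/-- The primal-dual domain `𝒵 = {(x, p) : x ≥ 0, ∑ⱼ uᵢⱼ xᵢⱼ > 0 for all i}`. -/
def ZSet (n m : ℕ) (u : Fin n → Fin m → ℝ) : Set (FisherPair n m) :=
  {z | (∀ i j, 0 ≤ z.1 i j) ∧ ∀ i, 0 < ∑ j, u i j * z.1 i j}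

/-- The Lagrangian `ℒ(x, p)` of the Fisher market problem. -/
def Lagr (n m : ℕ) (u : Fin n → Fin m → ℝ) (w : Fin n → ℝ)
    (x : Fin n → Fin m → ℝ) (p : Fin m → ℝ) : ℝ :=
  (∑ i, -(w i) * Real.log (∑ j, u i j * x i j)) + ∑ j, p j * ((∑ i, x i j) - 1)

/-- The primal-dual gap function `Q(z, ẑ) = ℒ(x, p̂) - ℒ(x̂, p)`. -/
def Qgap (n m : ℕ) (u : Fin n → Fin m → ℝ) (w : Fin n → ℝ)
    (z zh : FisherPair n m) : ℝ :=
  Lagr n m u w z.1 zh.2 - Lagr n m u w zh.1 z.2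

/-- The squared Euclidean norm of a pair `(x, p)`. -/
def pairNormSq (n m : ℕ) (z : FisherPair n m) : ℝ :=
  (∑ i, ∑ j, (z.1 i j) ^ 2) + ∑ j, (z.2 j) ^ 2

/-- The smoothed duality gap `G_ξ(z; ż) = sup_{ẑ ∈ 𝒵} {Q(z, ẑ) - (ξ/2)‖ẑ - ż‖²}`. -/
def smoothedGap (n m : ℕ) (u : Fin n → Fin m → ℝ) (w : Fin n → ℝ) (ξ : ℝ)
    (z zdot : FisherPair n m) : ℝ :=
  sSup {r : ℝ | ∃ zh ∈ ZSet n m u,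
    r = Qgap n m u w z zh - ξ / 2 * pairNormSq n m (zh - zdot)}

/-- The set `𝒵⋆` of saddle points of the Lagrangian `ℒ`. -/
def ZstarSet (n m : ℕ) (u : Fin n → Fin m → ℝ) (w : Fin n → ℝ) : Set (FisherPair n m) :=
  {zs | zs ∈ ZSet n m u ∧
    (∀ p : Fin m → ℝ, Lagr n m u w zs.1 p ≤ Lagr n m u w zs.1 zs.2) ∧
    (∀ x : Fin n → Fin m → ℝ, (∀ i j, 0 ≤ x i j) → (∀ i, 0 < ∑ j, u i j * x i j) →
      Lagr n m u w zs.1 zs.2 ≤ Lagr n m u w x zs.2)}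

/-- The squared Euclidean distance from a pair to the saddle-point set. -/
def pairDistSq (n m : ℕ) (z : FisherPair n m) (S : Set (FisherPair n m)) : ℝ :=
  sInf {d : ℝ | ∃ z' ∈ S, d = pairNormSq n m (z - z')}

section ErrorBound

/-! ### A Hoffman-type error bound -/

/-- A linear map that is injective at `0` on the orthant face with sign pattern `σ` is bounded below
on that face. The constant precedes the injectivity hypothesis so that it can be chosen for
every `σ` at once. -/
theorem face_bound {ι E : Type*} [Fintype ι] [NormedAddCommGroup E] [NormedSpace ℝ E]
    (M : (ι → ℝ) →ₗ[ℝ] E) (σ : ι → SignType) :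
    ∃ C : ℝ, 0 ≤ C ∧
      ((∀ h : ι → ℝ, (∀ k, 0 ≤ (σ k : ℝ) * h k ∧ (σ k = 0 → h k = 0)) → M h = 0 → h = 0) →
        ∀ h : ι → ℝ, (∀ k, 0 ≤ (σ k : ℝ) * h k ∧ (σ k = 0 → h k = 0)) → ‖h‖ ≤ C * ‖M h‖) := by
  by_cases hσ : ∀ h : ι → ℝ,
      (∀ k, 0 ≤ (σ k : ℝ) * h k ∧ (σ k = 0 → h k = 0)) → M h = 0 → h = 0
  swap
  · exact ⟨0, le_rfl, fun h => absurd h hσ⟩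
  have hMc : Continuous M := M.continuous_of_finiteDimensional
  have hFc : IsClosed {h : ι → ℝ | ∀ k, 0 ≤ (σ k : ℝ) * h k ∧ (σ k = 0 → h k = 0)} := by
    have : {h : ι → ℝ | ∀ k, 0 ≤ (σ k : ℝ) * h k ∧ (σ k = 0 → h k = 0)}
        = ⋂ k, ({h : ι → ℝ | 0 ≤ (σ k : ℝ) * h k} ∩ {h : ι → ℝ | σ k = 0 → h k = 0}) := by
      ext h; simp [Set.mem_iInter]
    rw [this]
    refine isClosed_iInter fun k => IsClosed.inter ?_ ?_
    · exact isClosed_le continuous_const (by fun_prop)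
    · by_cases h0 : σ k = 0
      · simp only [h0, forall_const]
        exact isClosed_eq (by fun_prop) continuous_const
      · simp [h0]
  have hK : IsCompact (Metric.sphere (0 : ι → ℝ) 1 ∩
      {h : ι → ℝ | ∀ k, 0 ≤ (σ k : ℝ) * h k ∧ (σ k = 0 → h k = 0)}) :=
    (isCompact_sphere _ _).inter_right hFc
  have hcont : ContinuousOn (fun h : ι → ℝ => ‖M h‖⁻¹) (Metric.sphere (0 : ι → ℝ) 1 ∩
      {h : ι → ℝ | ∀ k, 0 ≤ (σ k : ℝ) * h k ∧ (σ k = 0 → h k = 0)}) := by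
    refine ContinuousOn.inv₀ (hMc.norm.continuousOn) ?_
    rintro h ⟨hs, hF⟩ h0
    have := hσ h hF (norm_eq_zero.1 h0)
    simp [this] at hs
  obtain ⟨C, hC⟩ := (hK.image_of_continuousOn hcont).bddAbove
  refine ⟨max C 0, le_max_right _ _, fun _ h hF => ?_⟩
  by_cases h0 : h = 0
  · simp [h0]
  have hn : 0 < ‖h‖ := norm_pos_iff.2 h0
  have hmem : ‖h‖⁻¹ • h ∈ Metric.sphere (0 : ι → ℝ) 1 ∩
      {h : ι → ℝ | ∀ k, 0 ≤ (σ k : ℝ) * h k ∧ (σ k = 0 → h k = 0)} := by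
    refine ⟨by simp [norm_smul, hn.ne'], fun k => ⟨?_, fun hk => ?_⟩⟩
    · have := mul_nonneg (inv_pos.2 hn).le (hF k).1
      simp only [Pi.smul_apply, smul_eq_mul]
      linarith
    · simp [(hF k).2 hk]
  have h1 := hC ⟨_, hmem, rfl⟩
  have hM0 : 0 < ‖M h‖ := norm_pos_iff.2 fun h' => h0 (hσ h hF h')
  simp only [map_smul, norm_smul, norm_inv, norm_norm, mul_inv, inv_inv] at h1
  calc ‖h‖ = (‖h‖ * ‖M h‖⁻¹) * ‖M h‖ := by field_simp
    _ ≤ max C 0 * ‖M h‖ := by gcongr; exact h1.trans (le_max_left _ _)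

/-- Error bound: `d` can be replaced by some `d'` with the same image under `M`, of norm controlled by
`‖M d‖`, and with `d' k` no smaller than `min (d k) 0`; so if `x` and `x + d` are nonnegative,
then so is `x + d'`. -/
theorem hoffman {ι E : Type*} [Fintype ι] [NormedAddCommGroup E] [NormedSpace ℝ E]
    (M : (ι → ℝ) →ₗ[ℝ] E) :
    ∃ C : ℝ, 0 ≤ C ∧ ∀ d : ι → ℝ, ∃ d' : ι → ℝ, M d' = M d ∧
      (∀ k, min (d k) 0 ≤ d' k) ∧ ‖d'‖ ≤ C * ‖M d‖ := by
  classical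
  choose C hC0 hC using face_bound M
  refine ⟨∑ σ, C σ, Finset.sum_nonneg fun σ _ => hC0 σ, fun d => ?_⟩
  have hMc : Continuous M := M.continuous_of_finiteDimensional
  -- The box spanned by `0` and `d`, cut by the affine space `M d' = M d`.
  have hK : IsCompact (Set.Icc (fun k => min (d k) 0) (fun k => max (d k) 0)
      ∩ {e : ι → ℝ | M e = M d}) :=
    isCompact_Icc.inter_right (isClosed_eq hMc continuous_const)
  obtain ⟨e, ⟨heI, heM⟩, hmin⟩ := hK.exists_isMinOn (f := fun e : ι → ℝ => ∑ k, |e k|)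
    ⟨d, ⟨fun k => min_le_left _ _, fun k => le_max_left _ _⟩, rfl⟩
    (by fun_prop)
  have heM' : M e = M d := heM
  refine ⟨e, heM, heI.1, ?_⟩
  have hface := hC (fun k => SignType.sign (e k)) ?_ e ?_
  · rw [heM'] at hface
    refine hface.trans (mul_le_mul_of_nonneg_right ?_ (norm_nonneg _))
    exact Finset.single_le_sum (f := C) (fun σ _ => hC0 σ) (Finset.mem_univ _)
  · intro h hF hM
    -- Subtracting a small multiple of `h` from `e` decreases the `ℓ¹` norm by that multiple
    -- of `∑ k, |h k|`, which must therefore vanish.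
    have hev : ∀ᶠ ε in nhdsWithin (0 : ℝ) (Set.Ioi 0), ∀ k, ε * |h k| ≤ |e k| := by
      rw [Filter.eventually_all]
      intro k
      by_cases hk : e k = 0
      · have := (hF k).2 (by simp [hk])
        simp [this]
      · have ht : Filter.Tendsto (fun ε : ℝ => ε * |h k|) (nhdsWithin 0 (Set.Ioi 0)) (nhds 0) := by
          have : Continuous (fun ε : ℝ => ε * |h k|) := by fun_prop
          simpa using (this.tendsto 0).mono_left nhdsWithin_le_nhds
        exact (ht.eventually (gt_mem_nhds (abs_pos.2 hk))).mono fun ε hε => hε.le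
    obtain ⟨ε, hε, hε0⟩ := (hev.and self_mem_nhdsWithin).exists
    have hε0 : 0 < ε := hε0
    have key : ∀ k, |e k - ε * h k| = |e k| - ε * |h k| ∧
        min (d k) 0 ≤ e k - ε * h k ∧ e k - ε * h k ≤ max (d k) 0 := by
      intro k
      have h1 := heI.1 k
      have h2 := heI.2 k
      have h3 := hε k
      have h4 := hF k
      simp only at h1 h2
      rcases lt_trichotomy (e k) 0 with hk | hk | hk
      · have hh : h k ≤ 0 := by simpa [hk] using h4.1
        rw [abs_of_neg hk, abs_of_nonpos hh] at *
        have : ε * h k ≤ 0 := by nlinarith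
        refine ⟨by rw [abs_of_nonpos (by linarith)]; ring, by linarith,
          le_trans (by linarith) (le_max_right _ _)⟩
      · have hh : h k = 0 := h4.2 (by simp [hk])
        simp [hk, hh]
      · have hh : 0 ≤ h k := by simpa [hk] using h4.1
        rw [abs_of_pos hk, abs_of_nonneg hh] at *
        have : 0 ≤ ε * h k := by nlinarith
        refine ⟨by rw [abs_of_nonneg (by linarith)], le_trans (min_le_right _ _) (by linarith),
          by linarith⟩
    have hle : ∑ k, |e k| ≤ ∑ k, |e k - ε * h k| := by
      have := hmin (a := e - ε • h) ⟨⟨fun k => (key k).2.1, fun k => (key k).2.2⟩, by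
        simp [hM, heM']⟩
      simpa using this
    simp only [fun k => (key k).1, Finset.sum_sub_distrib, ← Finset.mul_sum] at hle
    have hz : ∑ k, |h k| ≤ 0 := by nlinarith
    have hz' := (Finset.sum_eq_zero_iff_of_nonneg (fun k _ => abs_nonneg (h k))).1
      (le_antisymm hz (Finset.sum_nonneg fun k _ => abs_nonneg _))
    ext k
    simpa using hz' k (Finset.mem_univ k)
  · intro k
    refine ⟨?_, fun hk => by simpa using hk⟩
    rcases lt_trichotomy (e k) 0 with hk | hk | hk
    · simp [hk, hk.le]
    · simp [hk]
    · simp [hk, hk.le]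

end ErrorBound

/-! ### Logarithm estimates -/

theorem log_one_add_ge {y : ℝ} (hy : -(1 / 2) ≤ y) : y - 2 * y ^ 2 ≤ Real.log (1 + y) := by
  have h1 : 0 < 1 + y := by linarith
  have h2 := Real.one_sub_inv_le_log_of_pos h1
  refine le_trans ?_ h2
  have h3 : 1 - (1 + y)⁻¹ - (y - 2 * y ^ 2) = y ^ 2 * (1 + 2 * y) / (1 + y) := by
    field_simp
    ring
  have h4 : 0 ≤ y ^ 2 * (1 + 2 * y) / (1 + y) :=
    div_nonneg (mul_nonneg (sq_nonneg _) (by linarith)) h1.le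
  linarith

theorem sub_one_sub_log_ge {t T : ℝ} (ht : 0 < t) (hT : t ≤ T) :
    (t - 1) ^ 2 / (2 * (1 + T)) ≤ t - 1 - Real.log t := by
  obtain ⟨s, hs, rfl⟩ : ∃ s : ℝ, 0 < s ∧ t = s ^ 2 :=
    ⟨√t, Real.sqrt_pos.2 ht, (Real.sq_sqrt ht.le).symm⟩
  have h1 := Real.log_le_sub_one_of_pos hs
  rw [Real.log_pow]
  push_cast
  have h2 : (s ^ 2 - 1) ^ 2 / (2 * (1 + T)) ≤ (s - 1) ^ 2 := by
    rw [div_le_iff₀ (by linarith)]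
    have : (s ^ 2 - 1) ^ 2 = (s - 1) ^ 2 * (s + 1) ^ 2 := by ring
    rw [this]
    refine mul_le_mul_of_nonneg_left ?_ (sq_nonneg _)
    nlinarith [sq_nonneg (s - 1)]
  nlinarith

/-! ### Optimality conditions at saddle points -/

section Fisher

variable {n m : ℕ} {u : Fin n → Fin m → ℝ} {w : Fin n → ℝ}

/-- Second-order upper bound for the Lagrangian when the allocation `x` moves by `δ` and no
utility changes by more than half of its value. -/
theorem lagr_perturb (hw : ∀ i, 0 < w i) (x δ : Fin n → Fin m → ℝ) (p : Fin m → ℝ)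
    (hU : ∀ i, 0 < ∑ j, u i j * x i j)
    (hδ : ∀ i, |∑ j, u i j * δ i j| ≤ 1 / 2 * ∑ j, u i j * x i j) :
    Lagr n m u w (x + δ) p ≤ Lagr n m u w x p
      + ∑ i, ∑ j, δ i j * (p j - w i * u i j / ∑ k, u i k * x i k)
      + ∑ i, 2 * w i * ((∑ j, u i j * δ i j) / ∑ k, u i k * x i k) ^ 2 := by
  have h1 : ∀ i, -(w i) * Real.log (∑ j, u i j * (x + δ) i j) ≤
      -(w i) * Real.log (∑ j, u i j * x i j)
      - w i * ((∑ j, u i j * δ i j) / ∑ k, u i k * x i k)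
      + 2 * w i * ((∑ j, u i j * δ i j) / ∑ k, u i k * x i k) ^ 2 := by
    intro i
    have hUi := hU i
    set U := ∑ j, u i j * x i j
    set V := ∑ j, u i j * δ i j
    have e1 : ∑ j, u i j * (x + δ) i j = U * (1 + V / U) := by
      have : ∑ j, u i j * (x + δ) i j = U + V := by
        simp only [U, V, Pi.add_apply, mul_add, Finset.sum_add_distrib]
      rw [this]; field_simp
    have hy : -(1 / 2) ≤ V / U := by
      rw [le_div_iff₀ hUi]
      have := (abs_le.1 (hδ i)).1
      linarith
    rw [e1, Real.log_mul hUi.ne' (by linarith)]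
    have := mul_le_mul_of_nonneg_left (log_one_add_ge hy) (hw i).le
    linarith
  have h2 := Finset.sum_le_sum fun i (_ : i ∈ Finset.univ) => h1 i
  have h3 : ∑ j, p j * ((∑ i, (x + δ) i j) - 1)
      = ∑ j, p j * ((∑ i, x i j) - 1) + ∑ i, ∑ j, δ i j * p j := by
    rw [Finset.sum_comm (f := fun i j => δ i j * p j), ← Finset.sum_add_distrib]
    refine Finset.sum_congr rfl fun j _ => ?_
    simp only [Pi.add_apply, Finset.sum_add_distrib, ← Finset.sum_mul]
    ring
  have h4 : ∑ i, ∑ j, δ i j * (p j - w i * u i j / ∑ k, u i k * x i k)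
      = ∑ i, ∑ j, δ i j * p j - ∑ i, w i * ((∑ j, u i j * δ i j) / ∑ k, u i k * x i k) := by
    rw [← Finset.sum_sub_distrib]
    refine Finset.sum_congr rfl fun i _ => ?_
    rw [Finset.sum_div, Finset.mul_sum, ← Finset.sum_sub_distrib]
    refine Finset.sum_congr rfl fun j _ => ?_
    ring
  simp only [Finset.sum_add_distrib, Finset.sum_sub_distrib] at h2
  unfold Lagr
  rw [h3, h4]
  linarith

/-- The directional derivative of `ℒ(·, p⋆)` at a saddle point is nonnegative in every feasible
direction `D`. -/
theorem saddle_first_order (hw : ∀ i, 0 < w i) {zs : FisherPair n m}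
    (hz : zs ∈ ZstarSet n m u w) (D : Fin n → Fin m → ℝ)
    (hD : ∀ ε : ℝ, 0 ≤ ε → ε ≤ 1 → ∀ i j, 0 ≤ zs.1 i j + ε * D i j) :
    0 ≤ ∑ i, ∑ j, D i j * (zs.2 j - w i * u i j / ∑ k, u i k * zs.1 i k) := by
  obtain ⟨⟨hx, hU⟩, -, hmin⟩ := hz
  set K := ∑ i, 2 * w i * ((∑ j, u i j * D i j) / ∑ k, u i k * zs.1 i k) ^ 2 with hK
  set A := ∑ i, ∑ j, D i j * (zs.2 j - w i * u i j / ∑ k, u i k * zs.1 i k) with hA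
  have hev : ∀ᶠ ε in nhdsWithin (0 : ℝ) (Set.Ioi 0), 0 ≤ A + ε * K := by
    have h1 : ∀ᶠ ε in nhdsWithin (0 : ℝ) (Set.Ioi 0),
        ∀ i, ε * |∑ j, u i j * D i j| < 1 / 2 * ∑ j, u i j * zs.1 i j := by
      rw [Filter.eventually_all]
      intro i
      have hc : Continuous (fun ε : ℝ => ε * |∑ j, u i j * D i j|) := by fun_prop
      have ht : Filter.Tendsto (fun ε : ℝ => ε * |∑ j, u i j * D i j|)
          (nhdsWithin 0 (Set.Ioi 0)) (nhds 0) := by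
        simpa using (hc.tendsto 0).mono_left nhdsWithin_le_nhds
      exact ht.eventually (gt_mem_nhds (by have := hU i; linarith))
    have h2 : ∀ᶠ ε in nhdsWithin (0 : ℝ) (Set.Ioi 0), ε < 1 :=
      nhdsWithin_le_nhds (gt_mem_nhds one_pos)
    filter_upwards [h1, h2, self_mem_nhdsWithin] with ε hε hε1 hε0
    have hε0 : 0 < ε := hε0
    have hsum : ∀ i, ∑ j, u i j * (ε • D) i j = ε * ∑ j, u i j * D i j := by
      intro i
      rw [Finset.mul_sum]
      refine Finset.sum_congr rfl fun j _ => ?_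
      simp only [Pi.smul_apply, smul_eq_mul]; ring
    have hδ : ∀ i, |∑ j, u i j * (ε • D) i j| ≤ 1 / 2 * ∑ j, u i j * zs.1 i j := by
      intro i
      rw [hsum, abs_mul, abs_of_pos hε0]
      exact (hε i).le
    have hp := lagr_perturb hw zs.1 (ε • D) zs.2 hU hδ
    have hm := hmin (zs.1 + ε • D) (fun i j => by simpa using hD ε hε0.le hε1.le i j) (by
      intro i
      have h3 : ∑ j, u i j * (zs.1 + ε • D) i j
          = ∑ j, u i j * zs.1 i j + ∑ j, u i j * (ε • D) i j := by
        simp only [Pi.add_apply, mul_add, Finset.sum_add_distrib]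
      have := (abs_le.1 (hδ i)).1
      have := hU i
      linarith)
    have e1 : ∑ i, ∑ j, (ε • D) i j * (zs.2 j - w i * u i j / ∑ k, u i k * zs.1 i k) = ε * A := by
      simp only [hA, Finset.mul_sum, Pi.smul_apply, smul_eq_mul, mul_assoc]
    have e2 : ∑ i, 2 * w i * ((∑ j, u i j * (ε • D) i j) / ∑ k, u i k * zs.1 i k) ^ 2
        = ε ^ 2 * K := by
      rw [hK, Finset.mul_sum]
      refine Finset.sum_congr rfl fun i _ => ?_
      rw [hsum]; ring
    rw [e1, e2] at hp
    have : 0 ≤ ε * (A + ε * K) := by nlinarith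
    exact nonneg_of_mul_nonneg_right this hε0
  have hc : Continuous (fun ε : ℝ => A + ε * K) := by fun_prop
  have ht : Filter.Tendsto (fun ε : ℝ => A + ε * K) (nhdsWithin 0 (Set.Ioi 0)) (nhds A) := by
    simpa using (hc.tendsto 0).mono_left nhdsWithin_le_nhds
  exact ge_of_tendsto ht hev

/-- Market clearing: `ℒ(x⋆, ·)` is affine and bounded above, hence constant. -/
theorem saddle_clears {zs : FisherPair n m} (hz : zs ∈ ZstarSet n m u w) (j : Fin m) :
    ∑ i, zs.1 i j = 1 := by
  have h := hz.2.1 (fun j => zs.2 j + ((∑ i, zs.1 i j) - 1))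
  simp only [Lagr, add_mul, Finset.sum_add_distrib] at h
  have h0 : ∑ j, ((∑ i, zs.1 i j) - 1) * ((∑ i, zs.1 i j) - 1) ≤ 0 := by linarith
  have h1 := (Finset.sum_eq_zero_iff_of_nonneg
    (fun j (_ : j ∈ Finset.univ) => mul_self_nonneg ((∑ i, zs.1 i j) - 1))).1
    (le_antisymm h0 (Finset.sum_nonneg fun j _ => mul_self_nonneg _)) j (Finset.mem_univ j)
  have := mul_self_eq_zero.1 h1
  linarith

theorem saddle_price_ge (hw : ∀ i, 0 < w i) {zs : FisherPair n m}
    (hz : zs ∈ ZstarSet n m u w) (i : Fin n) (j : Fin m) :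
    0 ≤ zs.2 j - w i * u i j / ∑ k, u i k * zs.1 i k := by
  have h := saddle_first_order hw hz (fun a b => if a = i then (if b = j then 1 else 0) else 0)
    (fun ε hε _ a b => by
      have := hz.1.1 a b
      split_ifs <;> simp <;> linarith)
  simpa [ite_mul] using h

theorem saddle_complementary (hw : ∀ i, 0 < w i) {zs : FisherPair n m}
    (hz : zs ∈ ZstarSet n m u w) (i : Fin n) (j : Fin m) :
    zs.1 i j * (zs.2 j - w i * u i j / ∑ k, u i k * zs.1 i k) = 0 := by
  have h := saddle_first_order hw hz (fun a b => - zs.1 a b)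
    (fun ε hε h1 a b => by
      have := hz.1.1 a b
      nlinarith)
  simp only [neg_mul, Finset.sum_neg_distrib] at h
  have hnn : ∀ a b, 0 ≤ zs.1 a b * (zs.2 b - w a * u a b / ∑ k, u a k * zs.1 a k) :=
    fun a b => mul_nonneg (hz.1.1 a b) (saddle_price_ge hw hz a b)
  have hz1 := (Finset.sum_eq_zero_iff_of_nonneg
    (fun a (_ : a ∈ Finset.univ) => Finset.sum_nonneg fun b _ => hnn a b)).1
    (le_antisymm (neg_nonneg.1 h)
      (Finset.sum_nonneg fun a _ => Finset.sum_nonneg fun b _ => hnn a b))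
    i (Finset.mem_univ i)
  exact (Finset.sum_eq_zero_iff_of_nonneg (fun b _ => hnn i b)).1 hz1 j (Finset.mem_univ j)

/-- The primal gap at the saddle prices, as a sum of nonnegative terms. -/
theorem lagr_sub_saddle (hw : ∀ i, 0 < w i) {zs : FisherPair n m}
    (hz : zs ∈ ZstarSet n m u w) (x : Fin n → Fin m → ℝ) (hU : ∀ i, 0 < ∑ j, u i j * x i j) :
    Lagr n m u w x zs.2 - Lagr n m u w zs.1 zs.2 =
      ∑ i, w i * ((∑ j, u i j * x i j) / (∑ j, u i j * zs.1 i j) - 1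
        - Real.log ((∑ j, u i j * x i j) / ∑ j, u i j * zs.1 i j))
      + ∑ i, ∑ j, x i j * (zs.2 j - w i * u i j / ∑ k, u i k * zs.1 i k) := by
  have hUs := hz.1.2
  -- Every consumer spends exactly the budget, and everything is sold.
  have hpw : ∑ j, zs.2 j = ∑ i, w i := by
    calc ∑ j, zs.2 j = ∑ j, ∑ i, zs.1 i j * zs.2 j := by
          refine Finset.sum_congr rfl fun j _ => ?_
          rw [← Finset.sum_mul, saddle_clears hz, one_mul]
      _ = ∑ i, ∑ j, zs.1 i j * zs.2 j := Finset.sum_comm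
      _ = ∑ i, w i := by
          refine Finset.sum_congr rfl fun i _ => ?_
          have : ∀ j, zs.1 i j * zs.2 j
              = w i / (∑ k, u i k * zs.1 i k) * (u i j * zs.1 i j) := by
            intro j
            have := saddle_complementary hw hz i j
            have e : w i / (∑ k, u i k * zs.1 i k) * (u i j * zs.1 i j)
              = zs.1 i j * (w i * u i j / ∑ k, u i k * zs.1 i k) := by ring
            rw [e]; linarith
          rw [Finset.sum_congr rfl fun j _ => this j, ← Finset.mul_sum,
            div_mul_cancel₀ _ (hUs i).ne']
  have h1 : ∀ i, w i * ((∑ j, u i j * x i j) / (∑ j, u i j * zs.1 i j) - 1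
        - Real.log ((∑ j, u i j * x i j) / ∑ j, u i j * zs.1 i j))
      = w i * ((∑ j, u i j * x i j) / (∑ j, u i j * zs.1 i j)) - w i
        + -(w i) * Real.log (∑ j, u i j * x i j) - -(w i) * Real.log (∑ j, u i j * zs.1 i j) := by
    intro i
    rw [Real.log_div (hU i).ne' (hUs i).ne']
    ring
  have h2 : ∑ i, ∑ j, x i j * (zs.2 j - w i * u i j / ∑ k, u i k * zs.1 i k)
      = ∑ j, zs.2 j * (∑ i, x i j)
        - ∑ i, w i * ((∑ j, u i j * x i j) / ∑ k, u i k * zs.1 i k) := by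
    have : ∑ j, zs.2 j * (∑ i, x i j) = ∑ i, ∑ j, x i j * zs.2 j := by
      rw [Finset.sum_comm]
      refine Finset.sum_congr rfl fun j _ => ?_
      rw [← Finset.sum_mul, mul_comm]
    rw [this, ← Finset.sum_sub_distrib]
    refine Finset.sum_congr rfl fun i _ => ?_
    rw [Finset.sum_div, Finset.mul_sum, ← Finset.sum_sub_distrib]
    refine Finset.sum_congr rfl fun j _ => ?_
    ring
  simp only [h1, h2, Finset.sum_add_distrib, Finset.sum_sub_distrib]
  simp only [Lagr, saddle_clears hz, sub_self, mul_zero, Finset.sum_const_zero, mul_sub, mul_one,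
    Finset.sum_sub_distrib, hpw]
  ring

theorem saddle_lagr_price {zs : FisherPair n m} (hz : zs ∈ ZstarSet n m u w) (p : Fin m → ℝ) :
    Lagr n m u w zs.1 p = Lagr n m u w zs.1 zs.2 := by
  simp [Lagr, saddle_clears hz]

theorem sub_one_sub_log_nonneg {t : ℝ} (ht : 0 < t) : 0 ≤ t - 1 - Real.log t := by
  have := Real.log_le_sub_one_of_pos ht
  linarith

/-- All saddle points share the same utilities and the same prices. -/
theorem saddle_unique (hw : ∀ i, 0 < w i) {z0 zs : FisherPair n m}
    (h0 : z0 ∈ ZstarSet n m u w) (hs : zs ∈ ZstarSet n m u w) :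
    (∀ i, ∑ j, u i j * zs.1 i j = ∑ j, u i j * z0.1 i j) ∧ zs.2 = z0.2 := by
  have hle : Lagr n m u w zs.1 z0.2 - Lagr n m u w z0.1 z0.2 ≤ 0 := by
    have a := hs.2.2 z0.1 h0.1.1 h0.1.2
    rw [saddle_lagr_price h0] at a
    rw [saddle_lagr_price hs]
    linarith
  rw [lagr_sub_saddle hw h0 zs.1 hs.1.2] at hle
  have ht : ∀ i, 0 < (∑ j, u i j * zs.1 i j) / ∑ j, u i j * z0.1 i j :=
    fun i => div_pos (hs.1.2 i) (h0.1.2 i)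
  have n1 : ∀ i ∈ Finset.univ, 0 ≤ w i * ((∑ j, u i j * zs.1 i j) / (∑ j, u i j * z0.1 i j) - 1
        - Real.log ((∑ j, u i j * zs.1 i j) / ∑ j, u i j * z0.1 i j)) :=
    fun i _ => mul_nonneg (hw i).le (sub_one_sub_log_nonneg (ht i))
  have n2 : ∀ i j, 0 ≤ zs.1 i j * (z0.2 j - w i * u i j / ∑ k, u i k * z0.1 i k) :=
    fun i j => mul_nonneg (hs.1.1 i j) (saddle_price_ge hw h0 i j)
  have n2' : ∀ i ∈ Finset.univ,
      0 ≤ ∑ j, zs.1 i j * (z0.2 j - w i * u i j / ∑ k, u i k * z0.1 i k) :=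
    fun i _ => Finset.sum_nonneg fun j _ => n2 i j
  have s1 := Finset.sum_nonneg n1
  have s2 := Finset.sum_nonneg n2'
  have z1 := (Finset.sum_eq_zero_iff_of_nonneg n1).1 (by linarith)
  have z2 := (Finset.sum_eq_zero_iff_of_nonneg n2').1 (by linarith)
  have hU : ∀ i, ∑ j, u i j * zs.1 i j = ∑ j, u i j * z0.1 i j := by
    intro i
    have h := (mul_eq_zero.1 (z1 i (Finset.mem_univ i))).resolve_left (hw i).ne'
    have hq := sub_one_sub_log_ge (ht i) le_rfl
    rw [h] at hq
    have hpos : 0 < 2 * (1 + (∑ j, u i j * zs.1 i j) / ∑ j, u i j * z0.1 i j) := by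
      have := ht i
      linarith
    rw [div_le_iff₀ hpos, zero_mul] at hq
    have h3 : (∑ j, u i j * zs.1 i j) / (∑ j, u i j * z0.1 i j) = 1 := by
      have := pow_eq_zero_iff (two_ne_zero) |>.1 (le_antisymm hq (sq_nonneg _))
      linarith
    exact (div_eq_one_iff_eq (h0.1.2 i).ne').1 h3
  refine ⟨hU, funext fun j => ?_⟩
  obtain ⟨i, -, hi⟩ : ∃ i ∈ Finset.univ, zs.1 i j ≠ 0 := by
    refine Finset.exists_ne_zero_of_sum_ne_zero ?_
    rw [saddle_clears hs]
    exact one_ne_zero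
  have a := (mul_eq_zero.1 ((Finset.sum_eq_zero_iff_of_nonneg (fun j _ => n2 i j)).1
    (z2 i (Finset.mem_univ i)) j (Finset.mem_univ j))).resolve_left hi
  have b := (mul_eq_zero.1 (saddle_complementary hw hs i j)).resolve_left hi
  rw [hU i] at b
  linarith

/-- Any market-clearing allocation with the saddle utilities is again optimal. -/
theorem mem_ZstarSet_of_clears {z0 : FisherPair n m} (h0 : z0 ∈ ZstarSet n m u w)
    {x : Fin n → Fin m → ℝ} (hx : ∀ i j, 0 ≤ x i j) (hc : ∀ j, ∑ i, x i j = 1)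
    (hU : ∀ i, ∑ j, u i j * x i j = ∑ j, u i j * z0.1 i j) :
    (x, z0.2) ∈ ZstarSet n m u w := by
  have hL : ∀ p, Lagr n m u w x p = Lagr n m u w z0.1 z0.2 := by
    intro p
    simp [Lagr, hc, hU, saddle_clears h0]
  refine ⟨⟨hx, fun i => ?_⟩, fun p => ?_, fun y hy hyU => ?_⟩
  · simp only [hU]; exact h0.1.2 i
  · simp only [hL]; exact le_rfl
  · simp only [hL]; exact h0.2.2 y hy hyU

/-! ### Lower bounds for the gap -/

/-- Quadratic growth in the prices. The witness is `x̂ᵢⱼ = x⋆ᵢⱼ (1 + ε (p⋆ⱼ - pⱼ))`: rescaling the saddle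
allocation keeps it feasible and only involves goods for which the slack vanishes. -/
theorem dual_growth (hu : ∀ i j, 0 ≤ u i j) (hw : ∀ i, 0 < w i) {zs : FisherPair n m}
    (hz : zs ∈ ZstarSet n m u w) {ξ ε B : ℝ} (hξ : 0 < ξ) (hε : 0 < ε) (hεB : ε * B ≤ 1 / 2)
    (hεW : ε * (2 * ∑ i, w i + ξ / 2) ≤ 1 / 2) (p : Fin m → ℝ) (hp : ∀ j, |zs.2 j - p j| ≤ B) :
    ∃ xh : Fin n → Fin m → ℝ, (∀ i j, 0 ≤ xh i j) ∧ (∀ i, 0 < ∑ j, u i j * xh i j) ∧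
      ε / 2 * ∑ j, (p j - zs.2 j) ^ 2 ≤ Lagr n m u w zs.1 zs.2 - Lagr n m u w xh p
        - ξ / 2 * ∑ i, ∑ j, (xh i j - zs.1 i j) ^ 2 := by
  have hx := hz.1.1
  have hU := hz.1.2
  have hd : ∀ j, |ε * (zs.2 j - p j)| ≤ 1 / 2 := by
    intro j
    rw [abs_mul, abs_of_pos hε]
    exact (mul_le_mul_of_nonneg_left (hp j) hε.le).trans hεB
  set D2 := ∑ j, (p j - zs.2 j) ^ 2 with hD2
  have hD2n : 0 ≤ D2 := Finset.sum_nonneg fun j _ => sq_nonneg _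
  set δ : Fin n → Fin m → ℝ := fun i j => ε * (zs.2 j - p j) * zs.1 i j with hδdef
  -- Any uniform bound on the relative changes of the goods bounds the relative utility changes
  have habs : ∀ c : ℝ, (∀ j, |ε * (zs.2 j - p j)| ≤ c) →
      ∀ i, |∑ j, u i j * δ i j| ≤ c * ∑ j, u i j * zs.1 i j := by
    intro c hc i
    refine (Finset.abs_sum_le_sum_abs _ _).trans ?_
    rw [Finset.mul_sum]
    refine Finset.sum_le_sum fun j _ => ?_
    have e : u i j * δ i j = (ε * (zs.2 j - p j)) * (u i j * zs.1 i j) := by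
      simp only [hδdef]; ring
    have hnn := mul_nonneg (hu i j) (hx i j)
    rw [e, abs_mul, abs_of_nonneg hnn]
    exact mul_le_mul_of_nonneg_right (hc j) hnn
  have hδ := habs _ hd
  have hpert := lagr_perturb hw zs.1 δ p hU hδ
  rw [saddle_lagr_price hz] at hpert
  have hlin : ∑ i, ∑ j, δ i j * (p j - w i * u i j / ∑ k, u i k * zs.1 i k) = -(ε * D2) := by
    rw [Finset.sum_comm, hD2, Finset.mul_sum, ← Finset.sum_neg_distrib]
    refine Finset.sum_congr rfl fun j _ => ?_
    have : ∀ i, δ i j * (p j - w i * u i j / ∑ k, u i k * zs.1 i k)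
        = zs.1 i j * (-(ε * (p j - zs.2 j) ^ 2)) := by
      intro i
      have h := saddle_complementary hw hz i j
      simp only [hδdef]
      linear_combination ε * (zs.2 j - p j) * h
    rw [Finset.sum_congr rfl fun i _ => this i, ← Finset.sum_mul, saddle_clears hz, one_mul]
  have hquad : ∑ i, 2 * w i * ((∑ j, u i j * δ i j) / ∑ k, u i k * zs.1 i k) ^ 2
      ≤ 2 * (∑ i, w i) * (ε ^ 2 * D2) := by
    rw [Finset.mul_sum, Finset.sum_mul]
    refine Finset.sum_le_sum fun i _ => mul_le_mul_of_nonneg_left ?_ (by have := hw i; linarith)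
    have h1 : ∀ j, |ε * (zs.2 j - p j)| ≤ √(ε ^ 2 * D2) := by
      intro j
      refine Real.abs_le_sqrt ?_
      rw [mul_pow]
      refine mul_le_mul_of_nonneg_left ?_ (sq_nonneg _)
      have := Finset.single_le_sum (f := fun j => (p j - zs.2 j) ^ 2)
        (fun j _ => sq_nonneg _) (Finset.mem_univ j)
      linarith [sq_abs (p j - zs.2 j), show (zs.2 j - p j) ^ 2 = (p j - zs.2 j) ^ 2 by ring]
    have h2 := habs _ h1 i
    have h3 : |(∑ j, u i j * δ i j) / ∑ k, u i k * zs.1 i k| ≤ √(ε ^ 2 * D2) := by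
      rw [abs_div, abs_of_pos (hU i), div_le_iff₀ (hU i)]
      exact h2
    have h4 := pow_le_pow_left₀ (abs_nonneg _) h3 2
    rwa [sq_abs, Real.sq_sqrt (mul_nonneg (sq_nonneg _) hD2n)] at h4
  have hnorm : ∑ i, ∑ j, ((zs.1 + δ) i j - zs.1 i j) ^ 2 ≤ ε ^ 2 * D2 := by
    rw [Finset.sum_comm, hD2, Finset.mul_sum]
    refine Finset.sum_le_sum fun j _ => ?_
    calc ∑ i, ((zs.1 + δ) i j - zs.1 i j) ^ 2
        ≤ ∑ i, zs.1 i j * (ε ^ 2 * (p j - zs.2 j) ^ 2) := by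
          refine Finset.sum_le_sum fun i _ => ?_
          have h1 : zs.1 i j ≤ 1 := by
            rw [← saddle_clears hz j]
            exact Finset.single_le_sum (f := fun i => zs.1 i j) (fun i _ => hx i j)
              (Finset.mem_univ i)
          have e : ((zs.1 + δ) i j - zs.1 i j) ^ 2
              = zs.1 i j * (zs.1 i j * (ε ^ 2 * (p j - zs.2 j) ^ 2)) := by
            simp only [hδdef, Pi.add_apply]; ring
          rw [e]
          refine mul_le_mul_of_nonneg_left ?_ (hx i j)
          exact mul_le_of_le_one_left (by positivity) h1
      _ = ε ^ 2 * (p j - zs.2 j) ^ 2 := by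
          rw [← Finset.sum_mul, saddle_clears hz, one_mul]
  refine ⟨zs.1 + δ, fun i j => ?_, fun i => ?_, ?_⟩
  · have h1 := (abs_le.1 (hd j)).1
    have : (zs.1 + δ) i j = zs.1 i j * (1 + ε * (zs.2 j - p j)) := by
      simp only [hδdef, Pi.add_apply]; ring
    rw [this]
    exact mul_nonneg (hx i j) (by linarith)
  · have h3 : ∑ j, u i j * (zs.1 + δ) i j
        = ∑ j, u i j * zs.1 i j + ∑ j, u i j * δ i j := by
      simp only [Pi.add_apply, mul_add, Finset.sum_add_distrib]
    have := (abs_le.1 (hδ i)).1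
    have := hU i
    linarith
  · rw [hlin] at hpert
    have h1 := mul_le_mul_of_nonneg_left hnorm (by linarith : 0 ≤ ξ / 2)
    have h2 := mul_le_mul_of_nonneg_right hεW (mul_nonneg hε.le hD2n)
    nlinarith

/-- The supremum defining the smoothed gap is finite: after `log t ≤ t`, the objective is linear
minus a positive definite quadratic. -/
theorem smoothedGap_bddAbove (hw : ∀ i, 0 < w i) {ξ : ℝ} (hξ : 0 < ξ)
    (z zs : FisherPair n m) :
    BddAbove {r : ℝ | ∃ zh ∈ ZSet n m u,
      r = Qgap n m u w z zh - ξ / 2 * pairNormSq n m (zh - zs)} := by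
  -- Completing the square in one variable.
  have hsq : ∀ a y c : ℝ, a * y - ξ / 2 * (y - c) ^ 2 ≤ a * c + a ^ 2 / (2 * ξ) := by
    intro a y c
    have e : a * c + a ^ 2 / (2 * ξ) - (a * y - ξ / 2 * (y - c) ^ 2)
        = (ξ * (y - c) - a) ^ 2 / (2 * ξ) := by
      field_simp
      ring
    have : 0 ≤ (ξ * (y - c) - a) ^ 2 / (2 * ξ) := by positivity
    linarith
  refine ⟨(∑ i, -(w i) * Real.log (∑ j, u i j * z.1 i j)) + ∑ j, z.2 j
    + ∑ j, (((∑ i, z.1 i j) - 1) * zs.2 j + ((∑ i, z.1 i j) - 1) ^ 2 / (2 * ξ))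
    + ∑ i, ∑ j, ((w i * u i j - z.2 j) * zs.1 i j + (w i * u i j - z.2 j) ^ 2 / (2 * ξ)), ?_⟩
  rintro r ⟨zh, ⟨hx, hU⟩, rfl⟩
  have h1 := Finset.sum_le_sum fun j (_ : j ∈ Finset.univ) =>
    hsq ((∑ i, z.1 i j) - 1) (zh.2 j) (zs.2 j)
  have h2 := Finset.sum_le_sum fun i (_ : i ∈ Finset.univ) =>
    Finset.sum_le_sum fun j (_ : j ∈ Finset.univ) =>
      hsq (w i * u i j - z.2 j) (zh.1 i j) (zs.1 i j)
  have h3 : ∑ i, w i * Real.log (∑ j, u i j * zh.1 i j) ≤ ∑ i, ∑ j, w i * u i j * zh.1 i j := by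
    refine Finset.sum_le_sum fun i _ => ?_
    have := mul_le_mul_of_nonneg_left (Real.log_le_self (hU i).le) (hw i).le
    simpa only [Finset.mul_sum, mul_assoc] using this
  have h4 : ∑ j, z.2 j * ((∑ i, zh.1 i j) - 1)
      = ∑ i, ∑ j, z.2 j * zh.1 i j - ∑ j, z.2 j := by
    rw [Finset.sum_comm, ← Finset.sum_sub_distrib]
    refine Finset.sum_congr rfl fun j _ => ?_
    rw [← Finset.mul_sum]; ring
  have h5 : ∑ j, zh.2 j * ((∑ i, z.1 i j) - 1) = ∑ j, ((∑ i, z.1 i j) - 1) * zh.2 j :=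
    Finset.sum_congr rfl fun j _ => mul_comm _ _
  simp only [sub_mul _ _ (zh.1 _ _), Finset.sum_sub_distrib, ← Finset.mul_sum] at h1 h2
  simp only [Qgap, Lagr, pairNormSq, Prod.fst_sub, Prod.snd_sub, Pi.sub_apply, h4, h5, neg_mul,
    Finset.sum_neg_distrib] at h1 h2 ⊢
  linarith

/-- The linear map sending an allocation to its utilities relative to `U` and to the total demand
for each good; with `U` the saddle utilities, the saddle allocations are the nonnegative
preimages of the all-ones vector. -/
def residualMap (u : Fin n → Fin m → ℝ) (U : Fin n → ℝ) :
    (Fin n × Fin m → ℝ) →ₗ[ℝ] (Fin n → ℝ) × (Fin m → ℝ) where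
  toFun x := (fun i => (∑ j, u i j * x (i, j)) / U i, fun j => ∑ i, x (i, j))
  map_add' x y := by
    ext k <;> simp [mul_add, Finset.sum_add_distrib, add_div]
  map_smul' c x := by
    ext k
    · simp only [Pi.smul_apply, smul_eq_mul, Prod.smul_fst, RingHom.id_apply, ← mul_div_assoc,
        Finset.mul_sum]
      congr 1
      exact Finset.sum_congr rfl fun j _ => by ring
    · simp [Finset.mul_sum]

/-- The squared distance from a nonnegative allocation to the saddle allocations is controlled by the
squared residuals of the utility and market-clearing equations. -/
theorem allocation_error_bound {z0 : FisherPair n m} (h0 : z0 ∈ ZstarSet n m u w) :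
    ∃ C : ℝ, 0 ≤ C ∧ ∀ x : Fin n → Fin m → ℝ, (∀ i j, 0 ≤ x i j) →
      ∃ x' : Fin n → Fin m → ℝ, (x', z0.2) ∈ ZstarSet n m u w ∧
        ∑ i, ∑ j, (x i j - x' i j) ^ 2 ≤
          C * (∑ i, ((∑ j, u i j * x i j) / (∑ j, u i j * z0.1 i j) - 1) ^ 2
            + ∑ j, ((∑ i, x i j) - 1) ^ 2) := by
  obtain ⟨C, hC, hH⟩ := hoffman (residualMap u fun i => ∑ j, u i j * z0.1 i j)
  refine ⟨n * m * C ^ 2, by positivity, fun x hx => ?_⟩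
  obtain ⟨d, hd, hmin, hnorm⟩ := hH (fun k => z0.1 k.1 k.2 - x k.1 k.2)
  have hU := h0.1.2
  have h1 : ∀ i, (∑ j, u i j * d (i, j)) / (∑ j, u i j * z0.1 i j)
      = 1 - (∑ j, u i j * x i j) / (∑ j, u i j * z0.1 i j) := by
    intro i
    have := congrFun (congrArg Prod.fst hd) i
    simpa [residualMap, mul_sub, Finset.sum_sub_distrib, sub_div, div_self (hU i).ne'] using this
  have h2 : ∀ j, ∑ i, d (i, j) = 1 - ∑ i, x i j := by
    intro j
    have := congrFun (congrArg Prod.snd hd) j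
    simpa [residualMap, Finset.sum_sub_distrib, saddle_clears h0] using this
  set R := ∑ i, ((∑ j, u i j * x i j) / (∑ j, u i j * z0.1 i j) - 1) ^ 2
            + ∑ j, ((∑ i, x i j) - 1) ^ 2 with hR
  have hR1 : 0 ≤ ∑ i, ((∑ j, u i j * x i j) / (∑ j, u i j * z0.1 i j) - 1) ^ 2 :=
    Finset.sum_nonneg fun i _ => sq_nonneg _
  have hR2 : 0 ≤ ∑ j, ((∑ i, x i j) - 1) ^ 2 := Finset.sum_nonneg fun i _ => sq_nonneg _
  have hres : ‖residualMap u (fun i => ∑ j, u i j * z0.1 i j) d‖ ≤ √R := by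
    rw [Prod.norm_def, max_le_iff, pi_norm_le_iff_of_nonneg (Real.sqrt_nonneg _),
      pi_norm_le_iff_of_nonneg (Real.sqrt_nonneg _)]
    refine ⟨fun i => Real.abs_le_sqrt ?_, fun j => Real.abs_le_sqrt ?_⟩
    · have := Finset.single_le_sum
        (f := fun i => ((∑ j, u i j * x i j) / (∑ j, u i j * z0.1 i j) - 1) ^ 2)
        (fun i _ => sq_nonneg _) (Finset.mem_univ i)
      simp only [residualMap, LinearMap.coe_mk, AddHom.coe_mk, h1]
      linarith [show (1 - (∑ j, u i j * x i j) / (∑ j, u i j * z0.1 i j)) ^ 2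
        = ((∑ j, u i j * x i j) / (∑ j, u i j * z0.1 i j) - 1) ^ 2 by ring]
    · have := Finset.single_le_sum (f := fun j => ((∑ i, x i j) - 1) ^ 2)
        (fun i _ => sq_nonneg _) (Finset.mem_univ j)
      simp only [residualMap, LinearMap.coe_mk, AddHom.coe_mk, h2]
      linarith [show (1 - ∑ i, x i j) ^ 2 = ((∑ i, x i j) - 1) ^ 2 by ring]
  have hdn : ‖d‖ ≤ C * √R := by
    rw [← hd] at hnorm
    exact hnorm.trans (mul_le_mul_of_nonneg_left hres hC)
  have hdsq : ∀ k, d k ^ 2 ≤ C ^ 2 * R := by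
    intro k
    have := pow_le_pow_left₀ (norm_nonneg _) ((norm_le_pi_norm d k).trans hdn) 2
    rwa [mul_pow, Real.sq_sqrt (by positivity), Real.norm_eq_abs, sq_abs] at this
  refine ⟨fun i j => x i j + d (i, j), mem_ZstarSet_of_clears h0 (fun i j => ?_) (fun j => ?_)
    (fun i => ?_), ?_⟩
  · have a := hmin (i, j)
    have b := hx i j
    have c := h0.1.1 i j
    rcases min_le_iff.1 a with h | h <;> linarith
  · rw [Finset.sum_add_distrib, h2]; ring
  · have := h1 i
    simp only [mul_add, Finset.sum_add_distrib]
    have hne := (hU i).ne'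
    field_simp at this
    linarith
  · calc ∑ i, ∑ j, (x i j - (x i j + d (i, j))) ^ 2
        ≤ ∑ i : Fin n, ∑ j : Fin m, C ^ 2 * R := by
          refine Finset.sum_le_sum fun i _ => Finset.sum_le_sum fun j _ => ?_
          have := hdsq (i, j)
          linarith [show (x i j - (x i j + d (i, j))) ^ 2 = d (i, j) ^ 2 by ring]
      _ = n * m * C ^ 2 * R := by simp; ring

/-- Lower bound for the smoothed gap, by evaluating the supremum at `p̂ = p⋆ + r / ξ`, with `r` the excess
demand, and at the allocation of `dual_growth`. -/
theorem gap_lower_bound (hu : ∀ i j, 0 ≤ u i j) (hw : ∀ i, 0 < w i) {z zs : FisherPair n m}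
    (hz : z ∈ ZSet n m u) (hs : zs ∈ ZstarSet n m u w) {ξ ε B : ℝ} (hξ : 0 < ξ) (hε : 0 < ε)
    (hεB : ε * B ≤ 1 / 2) (hεW : ε * (2 * ∑ i, w i + ξ / 2) ≤ 1 / 2)
    (hp : ∀ j, |zs.2 j - z.2 j| ≤ B) {T : ℝ}
    (hT : ∀ i, (∑ j, u i j * z.1 i j) / (∑ j, u i j * zs.1 i j) ≤ T) :
    ∑ i, w i * (((∑ j, u i j * z.1 i j) / (∑ j, u i j * zs.1 i j) - 1) ^ 2 / (2 * (1 + T)))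
      + 1 / (2 * ξ) * ∑ j, ((∑ i, z.1 i j) - 1) ^ 2 + ε / 2 * ∑ j, (z.2 j - zs.2 j) ^ 2
      ≤ smoothedGap n m u w ξ z zs := by
  obtain ⟨xh, hxh, hUh, hdual⟩ := dual_growth hu hw hs hξ hε hεB hεW z.2 hp
  refine le_trans ?_ (le_csSup (smoothedGap_bddAbove hw hξ z zs)
    ⟨(xh, fun j => zs.2 j + ((∑ i, z.1 i j) - 1) / ξ), ⟨hxh, hUh⟩, rfl⟩)
  have hL := lagr_sub_saddle hw hs z.1 hz.2
  have h1 : 0 ≤ ∑ i, ∑ j, z.1 i j * (zs.2 j - w i * u i j / ∑ k, u i k * zs.1 i k) :=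
    Finset.sum_nonneg fun i _ => Finset.sum_nonneg fun j _ =>
      mul_nonneg (hz.1 i j) (saddle_price_ge hw hs i j)
  have h2 := Finset.sum_le_sum fun i (_ : i ∈ Finset.univ) =>
    mul_le_mul_of_nonneg_left
      (sub_one_sub_log_ge (div_pos (hz.2 i) (hs.1.2 i)) (hT i)) (hw i).le
  have h3 : Lagr n m u w z.1 (fun j => zs.2 j + ((∑ i, z.1 i j) - 1) / ξ)
      = Lagr n m u w z.1 zs.2 + 1 / ξ * ∑ j, ((∑ i, z.1 i j) - 1) ^ 2 := by
    have : ∑ j, ((∑ i, z.1 i j) - 1) / ξ * ((∑ i, z.1 i j) - 1)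
        = 1 / ξ * ∑ j, ((∑ i, z.1 i j) - 1) ^ 2 := by
      rw [Finset.mul_sum]
      exact Finset.sum_congr rfl fun j _ => by ring
    simp only [Lagr, add_mul, Finset.sum_add_distrib, this]
    ring
  have h4 : ∑ j, (((∑ i, z.1 i j) - 1) / ξ) ^ 2
      = 1 / ξ ^ 2 * ∑ j, ((∑ i, z.1 i j) - 1) ^ 2 := by
    rw [Finset.mul_sum]
    exact Finset.sum_congr rfl fun j _ => by ring
  have h5 : ∀ r : ℝ, ξ / 2 * (1 / ξ ^ 2 * r) = 1 / (2 * ξ) * r := by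
    intro r; field_simp
  have h6 : ∀ r : ℝ, 1 / ξ * r = 2 * (1 / (2 * ξ) * r) := by
    intro r; field_simp
  simp only [Qgap, pairNormSq, Prod.fst_sub, Prod.snd_sub, Pi.sub_apply, add_sub_cancel_left,
    mul_add (ξ / 2), h3, h4, h5, h6]
  linarith

end Fisher

/-- Quadratic growth of the smoothed duality gap: for every `ξ > 0` and every bounded
set `S` there is `α > 0` such that `G_ξ(z; z⋆) ≥ α · dist(z, 𝒵⋆)²` for all `z ∈ 𝒵 ∩ S`
and all saddle points `z⋆ ∈ 𝒵⋆`. -/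
theorem smoothed_gap_quadratic_growth (n m : ℕ) (u : Fin n → Fin m → ℝ) (w : Fin n → ℝ)
    (hu : ∀ i j, 0 ≤ u i j)
    (hrow : ∀ i, ∃ j, 0 < u i j)
    (hcol : ∀ j, ∃ i, 0 < u i j)
    (hw : ∀ i, 0 < w i)
    (hne : (ZstarSet n m u w).Nonempty) :
    ∀ ξ : ℝ, 0 < ξ → ∀ S : Set (FisherPair n m), Bornology.IsBounded S →
      ∃ α : ℝ, 0 < α ∧
        ∀ z ∈ ZSet n m u ∩ S, ∀ zs ∈ ZstarSet n m u w,
          α * pairDistSq n m z (ZstarSet n m u w) ≤ smoothedGap n m u w ξ z zs := by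
  intro ξ hξ S hS
  obtain ⟨z0, h0⟩ := hne
  obtain ⟨R, hR⟩ := hS.exists_norm_le
  obtain ⟨C, hC, hX⟩ := allocation_error_bound h0
  have hU := h0.1.2
  have hW : 0 ≤ ∑ i, w i := Finset.sum_nonneg fun i _ => (hw i).le
  -- `T` and `B` bound the utility ratios and the price errors over `S`.
  set T := ∑ i, (∑ j, u i j * |R|) / (∑ j, u i j * z0.1 i j) with hTdef
  have hTi : ∀ i ∈ Finset.univ, 0 ≤ (∑ j, u i j * |R|) / (∑ j, u i j * z0.1 i j) :=
    fun i _ => div_nonneg (Finset.sum_nonneg fun j _ => mul_nonneg (hu i j) (abs_nonneg _)) (hU i).le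
  have hT0 : 0 ≤ T := Finset.sum_nonneg hTi
  set B := ‖z0‖ + |R| with hBdef
  have hB0 : 0 ≤ B := by positivity
  set ε := 1 / (2 * (1 + B + 2 * ∑ i, w i + ξ)) with hεdef
  have hden : 0 < 2 * (1 + B + 2 * ∑ i, w i + ξ) := by positivity
  have hε : 0 < ε := by positivity
  have hεB : ε * B ≤ 1 / 2 := by
    rw [hεdef, one_div, inv_mul_le_iff₀ hden]
    linarith
  have hεW : ε * (2 * ∑ i, w i + ξ / 2) ≤ 1 / 2 := by
    rw [hεdef, one_div, inv_mul_le_iff₀ hden]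
    linarith
  obtain ⟨c, hc, hcw⟩ : ∃ c : ℝ, 0 < c ∧ ∀ i, c ≤ w i := by
    rcases isEmpty_or_nonempty (Fin n) with h | h
    · exact ⟨1, one_pos, fun i => h.elim i⟩
    · obtain ⟨i0, hi0⟩ := Finite.exists_min w
      exact ⟨w i0, hw i0, hi0⟩
  obtain ⟨β, hβ, hβ1, hβ2, hβ3⟩ : ∃ β : ℝ, 0 < β ∧ β ≤ c / (2 * (1 + T)) ∧ β ≤ 1 / (2 * ξ) ∧
      β ≤ ε / 2 :=
    ⟨min (c / (2 * (1 + T))) (min (1 / (2 * ξ)) (ε / 2)), by positivity, min_le_left _ _,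
      (min_le_right _ _).trans (min_le_left _ _), (min_le_right _ _).trans (min_le_right _ _)⟩
  refine ⟨β / (1 + C), by positivity, ?_⟩
  rintro z ⟨hz, hzS⟩ zs hs
  obtain ⟨hUs, hps⟩ := saddle_unique hw h0 hs
  have hzR : ‖z‖ ≤ |R| := (hR z hzS).trans (le_abs_self R)
  have hxR : ∀ i j, z.1 i j ≤ |R| := fun i j =>
    (le_abs_self _).trans (((norm_le_pi_norm (z.1 i) j).trans (norm_le_pi_norm z.1 i)).trans
      ((norm_fst_le z).trans hzR))
  have hp : ∀ j, |zs.2 j - z.2 j| ≤ B := by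
    intro j
    rw [hps]
    refine (abs_sub _ _).trans (add_le_add ?_ ?_)
    · exact (norm_le_pi_norm z0.2 j).trans (norm_snd_le z0)
    · exact ((norm_le_pi_norm z.2 j).trans (norm_snd_le z)).trans hzR
  have hT : ∀ i, (∑ j, u i j * z.1 i j) / (∑ j, u i j * zs.1 i j) ≤ T := by
    intro i
    rw [hUs]
    refine le_trans ?_ (Finset.single_le_sum hTi (Finset.mem_univ i))
    exact div_le_div_of_nonneg_right
      (Finset.sum_le_sum fun j _ => mul_le_mul_of_nonneg_left (hxR i j) (hu i j)) (hU i).le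
  refine le_trans ?_ (gap_lower_bound hu hw hz hs hξ hε hεB hεW hp hT)
  obtain ⟨x', hx', hdist⟩ := hX z.1 hz.1
  simp only [hUs, hps]
  set a := ∑ i, ((∑ j, u i j * z.1 i j) / (∑ j, u i j * z0.1 i j) - 1) ^ 2 with ha
  set b := ∑ j, ((∑ i, z.1 i j) - 1) ^ 2 with hb
  set q := ∑ j, (z.2 j - z0.2 j) ^ 2 with hq
  have ha0 : 0 ≤ a := Finset.sum_nonneg fun i _ => sq_nonneg _
  have hb0 : 0 ≤ b := Finset.sum_nonneg fun i _ => sq_nonneg _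
  have hq0 : 0 ≤ q := Finset.sum_nonneg fun i _ => sq_nonneg _
  have hD : pairDistSq n m z (ZstarSet n m u w) ≤ C * (a + b) + q := by
    have hmem : pairNormSq n m (z - (x', z0.2)) ∈
        {d : ℝ | ∃ z' ∈ ZstarSet n m u w, d = pairNormSq n m (z - z')} := ⟨_, hx', rfl⟩
    refine (csInf_le ⟨0, ?_⟩ hmem).trans ?_
    · rintro d ⟨z', -, rfl⟩
      unfold pairNormSq
      positivity
    · simp only [pairNormSq, Prod.fst_sub, Prod.snd_sub, Pi.sub_apply]
      linarith
  have h1 : β * a ≤ ∑ i, w i *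
      (((∑ j, u i j * z.1 i j) / (∑ j, u i j * z0.1 i j) - 1) ^ 2 / (2 * (1 + T))) := by
    rw [ha, Finset.mul_sum]
    refine Finset.sum_le_sum fun i _ => ?_
    have h2 : β ≤ w i / (2 * (1 + T)) :=
      hβ1.trans (div_le_div_of_nonneg_right (hcw i) (by positivity))
    calc _ ≤ w i / (2 * (1 + T)) * _ := mul_le_mul_of_nonneg_right h2 (sq_nonneg _)
      _ = _ := by ring
  have h2 := mul_le_mul_of_nonneg_right hβ2 hb0
  have h3 := mul_le_mul_of_nonneg_right hβ3 hq0
  have h4 : β / (1 + C) * pairDistSq n m z (ZstarSet n m u w) ≤ β * (a + b + q) := by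
    have h5 : pairDistSq n m z (ZstarSet n m u w) ≤ (1 + C) * (a + b + q) := by
      nlinarith [mul_nonneg hC hq0]
    calc _ ≤ β / (1 + C) * ((1 + C) * (a + b + q)) :=
          mul_le_mul_of_nonneg_left h5 (by positivity)
      _ = _ := by field_simp
  linarith

end
end

section
/- Suppose additionally that u_{ij} \in [0,1] for all i,j, and let E \in \mathbb{R}^{n\times m} with e_{lj} \in [0,1] for all l,j and \sum_{l=1}^n e_{lj} = 1 for every j. Let u_0, e_0 > 0 and p, q \in (0,1], and suppose: (a) for every j, the set \Phi_j = \{i : u_{ij} \ge u_0\} is nonempty and |\Phi_j| \le 2np; and (b) for every pair (l, i), |\{j : e_{lj} \ge e_0 \text{ and } u_{ij} \ge u_0\}| \ge mpq/2. Let w \in \mathbb{R}^n with w_i > 0 for all i and \sum_{i=1}^n w_i = 1, and let (x, t, \hat{p}, y) satisfy the KKT system of the Fisher market problem with budget vector w and price vector \hat{p}. Then the vector E\hat{p} \in \mathbb{R}^n satisfies \sum_{l=1}^n (E\hat{p})_l = 1 and (E\hat{p})_l \ge \frac{u_0 e_0 q}{4n} for every l. -/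
/-!
Complementary slackness and market clearing give `∑ j, p̂ j = ∑ i, t i * y i = ∑ i, w i = 1`, and the
columns of `E` sum to one, so `E p̂` has total mass one.

For the lower bound, `p̂ j ≥ u i j * y i ≥ u0 * y i` for each `i` in `Φ j = {i | u0 ≤ u i j}`.
Averaging over `Φ j`, which has at most `2 n p` elements, gives
`2 n p * p̂ j ≥ u0 * ∑ i ∈ Φ j, y i`. Summing over the `j` with `e0 ≤ E l j` and exchanging the sums,
each `y i` is counted at least `m p q / 2` times, so
`2 n p * (E p̂) l ≥ e0 * u0 * (m p q / 2) * ∑ i, y i`. Finally `m * ∑ i, y i ≥ 1`, because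
`t i ≤ m` and `∑ i, t i * y i = 1`.
-/

open BigOperators

/-- The equilibrium prices sum to the total budget. -/
lemma FisherKKT.sum_price {n m : ℕ} {u : Fin n → Fin m → ℝ} {w : Fin n → ℝ}
    {x : Fin n → Fin m → ℝ} {t : Fin n → ℝ} {p : Fin m → ℝ} {y : Fin n → ℝ}
    (h : FisherKKT n m u w x t p y) : ∑ j, p j = ∑ i, w i := by
  obtain ⟨hty, hcs, -, hx1, ht, -⟩ := h
  calc ∑ j, p j = ∑ j, ∑ i, x i j * p j := by
        refine Finset.sum_congr rfl fun j _ => ?_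
        rw [← Finset.sum_mul, hx1, one_mul]
    _ = ∑ i, ∑ j, x i j * p j := Finset.sum_comm
    _ = ∑ i, w i := by
        refine Finset.sum_congr rfl fun i _ => ?_
        rw [← hty i, ht i, Finset.sum_mul]
        refine Finset.sum_congr rfl fun j _ => ?_
        linear_combination hcs i j

lemma FisherKKT.y_pos {n m : ℕ} {u : Fin n → Fin m → ℝ} {w : Fin n → ℝ}
    {x : Fin n → Fin m → ℝ} {t : Fin n → ℝ} {p : Fin m → ℝ} {y : Fin n → ℝ}
    (h : FisherKKT n m u w x t p y) (hu : ∀ i j, 0 ≤ u i j) (hw : ∀ i, 0 < w i) (i : Fin n) :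
    0 < y i := by
  obtain ⟨hty, -, -, -, ht, hx0⟩ := h
  have ht0 : 0 ≤ t i := by
    rw [ht i]
    exact Finset.sum_nonneg fun j _ => mul_nonneg (hu i j) (hx0 i j)
  refine pos_of_mul_pos_right ?_ ht0
  rw [hty i]
  exact hw i

/-- A consumer receives at most one unit of each good, each of utility at most one. -/
lemma FisherKKT.t_le {n m : ℕ} {u : Fin n → Fin m → ℝ} {w : Fin n → ℝ}
    {x : Fin n → Fin m → ℝ} {t : Fin n → ℝ} {p : Fin m → ℝ} {y : Fin n → ℝ}
    (h : FisherKKT n m u w x t p y) (hu : ∀ i j, u i j ≤ 1) (i : Fin n) : t i ≤ m := by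
  obtain ⟨-, -, -, hx1, ht, hx0⟩ := h
  rw [ht i]
  calc ∑ j, u i j * x i j ≤ ∑ _j : Fin m, (1 : ℝ) := by
        refine Finset.sum_le_sum fun j _ => ?_
        have hx : x i j ≤ 1 := by
          rw [← hx1 j]
          exact Finset.single_le_sum (f := fun k => x k j) (fun k _ => hx0 k j)
            (Finset.mem_univ i)
        exact mul_le_one₀ (hu i j) (hx0 i j) hx
    _ = m := by simp

/-- Under the deterministic counting conditions (a) and (b), the updated budget
vector `E p̂` obtained from Fisher equilibrium prices again lies in the set
`Ω = {w ∈ Δ : wᵢ ≥ u₀ e₀ q / (4n)}`. -/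
theorem budget_update_stays_in_Omega (n m : ℕ) (hn : 0 < n)
    (u E : Fin n → Fin m → ℝ)
    (hu01 : ∀ i j, u i j ∈ Set.Icc (0 : ℝ) 1)
    (hrow : ∀ i, ∃ j, 0 < u i j)
    (hcol : ∀ j, ∃ i, 0 < u i j)
    (hE01 : ∀ l j, E l j ∈ Set.Icc (0 : ℝ) 1)
    (hEcol : ∀ j, ∑ l, E l j = 1)
    (u0 e0 : ℝ) (hu0 : 0 < u0) (he0 : 0 < e0)
    (p q : ℝ) (hp : p ∈ Set.Ioc (0 : ℝ) 1) (hq : q ∈ Set.Ioc (0 : ℝ) 1)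
    (ha : ∀ j : Fin m, (∃ i, u0 ≤ u i j) ∧
      ((Finset.univ.filter fun i : Fin n => u0 ≤ u i j).card : ℝ) ≤ 2 * n * p)
    (hb : ∀ l i : Fin n,
      (m : ℝ) * p * q / 2 ≤
        ((Finset.univ.filter fun j : Fin m => e0 ≤ E l j ∧ u0 ≤ u i j).card : ℝ))
    (w : Fin n → ℝ) (hw : ∀ i, 0 < w i) (hwsum : ∑ i, w i = 1)
    (x : Fin n → Fin m → ℝ) (t : Fin n → ℝ) (phat : Fin m → ℝ) (y : Fin n → ℝ)
    (hkkt : FisherKKT n m u w x t phat y) :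
    (∑ l, ∑ j, E l j * phat j) = 1 ∧
    ∀ l : Fin n, u0 * e0 * q / (4 * n) ≤ ∑ j, E l j * phat j := by
  obtain ⟨hp0, -⟩ := hp
  have hu_nonneg : ∀ i j, 0 ≤ u i j := fun i j => (hu01 i j).1
  have hy := hkkt.y_pos hu_nonneg hw
  have htm := hkkt.t_le fun i j => (hu01 i j).2
  have hsum := hkkt.sum_price
  obtain ⟨hty, -, hprice, -, -, -⟩ := hkkt
  have hphat : ∀ j, 0 ≤ phat j := fun j => by
    have h := hprice ⟨0, hn⟩ j
    have := mul_nonneg (hu_nonneg ⟨0, hn⟩ j) (hy ⟨0, hn⟩).le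
    linarith
  have hmy : 1 ≤ (m : ℝ) * ∑ i, y i := by
    rw [← hwsum, Finset.mul_sum]
    refine Finset.sum_le_sum fun i _ => ?_
    rw [← hty i]
    exact mul_le_mul_of_nonneg_right (htm i) (hy i).le
  refine ⟨?_, fun l => ?_⟩
  · rw [Finset.sum_comm, ← hwsum, ← hsum]
    refine Finset.sum_congr rfl fun j _ => ?_
    rw [← Finset.sum_mul, hEcol, one_mul]
  have havg : ∀ j, (∑ i with u0 ≤ u i j, u0 * y i) ≤ 2 * n * p * phat j := fun j => by
    calc (∑ i with u0 ≤ u i j, u0 * y i) ≤ ∑ i with u0 ≤ u i j, phat j := by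
          refine Finset.sum_le_sum fun i hi => ?_
          have h := mul_le_mul_of_nonneg_right (Finset.mem_filter.1 hi).2 (hy i).le
          linarith [hprice i j]
      _ = ((Finset.univ.filter fun i : Fin n => u0 ≤ u i j).card : ℝ) * phat j := by
          rw [Finset.sum_const, nsmul_eq_mul]
      _ ≤ 2 * n * p * phat j := mul_le_mul_of_nonneg_right (ha j).2 (hphat j)
  have hterm : ∀ j, (∑ i, if e0 ≤ E l j ∧ u0 ≤ u i j then e0 * (u0 * y i) else 0)
      ≤ 2 * n * p * (E l j * phat j) := fun j => by
    have hnn : 0 ≤ 2 * n * p * phat j := by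
      have := hphat j
      positivity
    by_cases he : e0 ≤ E l j
    · simp only [he, true_and]
      rw [← Finset.sum_filter, ← Finset.mul_sum]
      calc _ ≤ e0 * (2 * n * p * phat j) := mul_le_mul_of_nonneg_left (havg j) he0.le
        _ ≤ E l j * (2 * n * p * phat j) := mul_le_mul_of_nonneg_right he hnn
        _ = _ := by ring
    · simp only [he, false_and, if_false, Finset.sum_const_zero]
      have := mul_nonneg (hE01 l j).1 hnn
      linarith
  have hmain : e0 * u0 * (p * q / 2) ≤ 2 * n * p * ∑ j, E l j * phat j := by
    have hq0 := hq.1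
    calc e0 * u0 * (p * q / 2) ≤ e0 * u0 * (p * q / 2) * (m * ∑ i, y i) :=
          le_mul_of_one_le_right (by positivity) hmy
      _ = ∑ i, (m * p * q / 2) * (e0 * (u0 * y i)) := by
          rw [← Finset.mul_sum, ← Finset.mul_sum, ← Finset.mul_sum]
          ring
      _ ≤ ∑ i, ∑ j, if e0 ≤ E l j ∧ u0 ≤ u i j then e0 * (u0 * y i) else 0 := by
          refine Finset.sum_le_sum fun i _ => ?_
          rw [← Finset.sum_filter, Finset.sum_const, nsmul_eq_mul]
          have := hy i
          exact mul_le_mul_of_nonneg_right (hb l i) (by positivity)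
      _ = ∑ j, ∑ i, if e0 ≤ E l j ∧ u0 ≤ u i j then e0 * (u0 * y i) else 0 := Finset.sum_comm
      _ ≤ ∑ j, 2 * n * p * (E l j * phat j) := Finset.sum_le_sum fun j _ => hterm j
      _ = _ := by rw [Finset.mul_sum]
  have hn' : (0 : ℝ) < n := by exact_mod_cast hn
  rw [div_le_iff₀ (by positivity)]
  refine le_of_mul_le_mul_left ?_ hp0
  linarith
end

section
/- Let E \in \mathbb{R}^{n\times m}, let \Omega \subseteq \{w \in \mathbb{R}^n : \sum_{i=1}^n w_i = 1\}, let \kappa > 0 and \gamma \in (0,1), and let P : \Omega \to \mathbb{R}^m be a map satisfying: (i) \sum_{j=1}^m P(w)_j = \sum_{i=1}^n w_i for every w \in \Omega, and (ii) \|P(w) - P(w')\| \le \kappa \|w - w'\| for all w, w' \in \Omega. If the operator norm satisfies \|E - \frac{1}{n}\mathbf{1}_n \mathbf{1}_m^T\| \le \gamma / \kappa, then the map T(w) = E \cdot P(w) is a contraction on \Omega with modulus \gamma, i.e., \|E P(w) - E P(w')\| \le \gamma \|w - w'\| for all w, w' \in \Omega. -/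
open BigOperators

noncomputable section

/-- Euclidean norm of a finite real vector. -/
def eNorm {k : ℕ} (v : Fin k → ℝ) : ℝ := Real.sqrt (∑ i, (v i) ^ 2)

/-- If the price map `P` sums to the total budget, is `κ`-Lipschitz on `Ω`, and the
centered endowment matrix `E - (1/n)𝟙ₙ𝟙ₘᵀ` has operator norm at most `γ/κ`, then the
fixed-point map `T(w) = E · P(w)` is a `γ`-contraction on `Ω`. -/
theorem fixed_point_map_contraction (n m : ℕ) (hn : 0 < n)
    (E : Fin n → Fin m → ℝ)
    (Ω : Set (Fin n → ℝ)) (hΩ : ∀ w ∈ Ω, ∑ i, w i = 1)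
    (κ γ : ℝ) (hκ : 0 < κ) (hγ : γ ∈ Set.Ioo (0 : ℝ) 1)
    (P : (Fin n → ℝ) → (Fin m → ℝ))
    (hPsum : ∀ w ∈ Ω, ∑ j, P w j = ∑ i, w i)
    (hPlip : ∀ w ∈ Ω, ∀ w' ∈ Ω, eNorm (P w - P w') ≤ κ * eNorm (w - w'))
    (hop : ∀ v : Fin m → ℝ,
      eNorm (fun l : Fin n => ∑ j, (E l j - 1 / (n : ℝ)) * v j) ≤ γ / κ * eNorm v) :
    ∀ w ∈ Ω, ∀ w' ∈ Ω,
      eNorm (fun l : Fin n => (∑ j, E l j * P w j) - ∑ j, E l j * P w' j) ≤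
        γ * eNorm (w - w') := by
  intro w hw w' hw'
  -- `P w - P w'` sums to zero, so the rank-one matrix `(1/n)𝟙ₙ𝟙ₘᵀ` annihilates it
  -- and `E` may be replaced by the centered matrix.
  have hzero : ∑ j, (P w - P w') j = 0 := by
    simp only [Pi.sub_apply, Finset.sum_sub_distrib]
    rw [hPsum w hw, hPsum w' hw', hΩ w hw, hΩ w' hw', sub_self]
  have hcentered : (fun l : Fin n => (∑ j, E l j * P w j) - ∑ j, E l j * P w' j) =
      fun l : Fin n => ∑ j, (E l j - 1 / (n : ℝ)) * (P w - P w') j := by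
    funext l
    simp only [sub_mul, Finset.sum_sub_distrib, ← Finset.mul_sum, hzero]
    simp [mul_sub, Finset.sum_sub_distrib]
  rw [hcentered]
  calc _ ≤ γ / κ * eNorm (P w - P w') := hop _
    _ ≤ γ / κ * (κ * eNorm (w - w')) :=
      mul_le_mul_of_nonneg_left (hPlip w hw w' hw') (div_pos hγ.1 hκ).le
    _ = γ * eNorm (w - w') := by field_simp

end
end

section
/- Let (x^\star, t^\star) be an optimal solution of the Eisenberg–Gale program: minimize \sum_{i=1}^n -w_i \log t_i over x \in \mathbb{R}^{n\times m}, t \in \mathbb{R}^n subject to \sum_{i=1}^n x_{ij} = 1 for every j, t_i = \sum_{j=1}^m u_{ij} x_{ij} for every i, x_{ij} \ge 0, t_i > 0. Then (x^\star, t^\star) is also an optimal solution of the modified program in which the objective is replaced by its second-order Taylor expansion at t^\star, namely minimize \sum_{i=1}^n \big[-w_i \log t^\star_i - \frac{w_i}{t^\star_i}(t_i - t^\star_i) + \frac{w_i}{2 (t^\star_i)^2}(t_i - t^\star_i)^2\big] over the same feasible set; moreover, the optimal t-component of the modified program is unique and equals t^\star. -/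
/-!
The feasible set is convex, so for a feasible `(x, t)` the whole segment from `(x⋆, t⋆)` to
`(x, t)` is feasible. Optimality of `t⋆` along this segment gives the first-order condition
`∑ i, w i / t⋆ i * (t i - t⋆ i) ≤ 0` (`EG_first_order`). The Taylor objective at `t` exceeds its
value at `t⋆` by the negative of this sum plus the quadratic term, a positive definite form in
`t - t⋆`; hence `t⋆` minimizes the Taylor objective, and any other minimizer has zero quadratic
term, so equals `t⋆`.
-/

open BigOperators

noncomputable section

/-- The second-order Taylor expansion of the Eisenberg–Gale objective at `t⋆`. -/
def EGObjTaylor (n : ℕ) (w : Fin n → ℝ) (tstar : Fin n → ℝ) (t : Fin n → ℝ) : ℝ :=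
  ∑ i, (-(w i) * Real.log (tstar i) - w i / tstar i * (t i - tstar i) +
    w i / (2 * (tstar i) ^ 2) * (t i - tstar i) ^ 2)

lemma EGFeasible.segment {n m : ℕ} {u x y : Fin n → Fin m → ℝ} {t r : Fin n → ℝ}
    (hx : EGFeasible n m u x t) (hy : EGFeasible n m u y r) {s : ℝ} (hs0 : 0 < s) (hs1 : s < 1) :
    EGFeasible n m u (fun i j => (1 - s) * x i j + s * y i j)
      (fun i => (1 - s) * t i + s * r i) := by
  obtain ⟨hx1, hx2, hx3, hx4⟩ := hx
  obtain ⟨hy1, hy2, hy3, hy4⟩ := hy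
  have hs : 0 < 1 - s := by linarith
  refine ⟨fun j => ?_, fun i => ?_, fun i j => ?_, fun i => ?_⟩
  · simp only [Finset.sum_add_distrib, ← Finset.mul_sum, hx1, hy1]
    ring
  · simp only [hx2 i, hy2 i, Finset.mul_sum, ← Finset.sum_add_distrib]
    exact Finset.sum_congr rfl fun j _ => by ring
  · have := hx3 i j
    have := hy3 i j
    positivity
  · have := hx4 i
    have := hy4 i
    positivity

/-- First-order optimality condition for the Eisenberg–Gale program. -/
lemma EG_first_order {n m : ℕ} {u : Fin n → Fin m → ℝ} {w : Fin n → ℝ}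
    (hw : ∀ i, 0 < w i) {xstar : Fin n → Fin m → ℝ} {tstar : Fin n → ℝ}
    (hfeas : EGFeasible n m u xstar tstar)
    (hopt : ∀ x t, EGFeasible n m u x t → EGObj n w tstar ≤ EGObj n w t)
    {x : Fin n → Fin m → ℝ} {t : Fin n → ℝ} (hx : EGFeasible n m u x t) :
    ∑ i, w i / tstar i * (t i - tstar i) ≤ 0 := by
  have hts := hfeas.2.2.2
  -- `log y ≥ 1 - 1 / y` with `y = z / t⋆` bounds the objective change along the segment.
  have key : ∀ s : ℝ, 0 < s → s < 1 →
      ∑ i, w i / ((1 - s) * tstar i + s * t i) * (t i - tstar i) ≤ 0 := by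
    intro s hs0 hs1
    have hz := hfeas.segment hx hs0 hs1
    have hle := hopt _ _ hz
    have hzpos := hz.2.2.2
    simp only [EGObj, neg_mul, Finset.sum_neg_distrib, neg_le_neg_iff] at hle
    have hsum : s * ∑ i, w i / ((1 - s) * tstar i + s * t i) * (t i - tstar i) ≤
        ∑ i, (w i * Real.log ((1 - s) * tstar i + s * t i) - w i * Real.log (tstar i)) := by
      rw [Finset.mul_sum]
      refine Finset.sum_le_sum fun i _ => ?_
      have hzi : 0 < (1 - s) * tstar i + s * t i := hzpos i
      have hlog := Real.one_sub_inv_le_log_of_pos (div_pos hzi (hts i))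
      rw [Real.log_div hzi.ne' (hts i).ne', inv_div] at hlog
      have hmul := mul_le_mul_of_nonneg_left hlog (hw i).le
      have heq : s * (w i / ((1 - s) * tstar i + s * t i) * (t i - tstar i)) =
          w i * (1 - tstar i / ((1 - s) * tstar i + s * t i)) := by
        have hne := hzi.ne'
        rw [one_sub_div hne]
        ring
      rw [heq]
      linarith
    rw [Finset.sum_sub_distrib] at hsum
    by_contra hcon
    have := mul_pos hs0 (not_le.mp hcon)
    linarith
  have hcont : ContinuousAt
      (fun s : ℝ => ∑ i, w i / ((1 - s) * tstar i + s * t i) * (t i - tstar i)) 0 := by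
    refine tendsto_finsetSum _ fun i _ => ?_
    have hne : (1 - (0 : ℝ)) * tstar i + 0 * t i ≠ 0 := by simpa using (hts i).ne'
    exact ContinuousAt.mul (ContinuousAt.div (by fun_prop) (by fun_prop) hne) (by fun_prop)
  have hlim := hcont.tendsto.mono_left (nhdsWithin_le_nhds (s := Set.Ioi 0))
  simp only [sub_zero, one_mul, zero_mul, add_zero] at hlim
  refine le_of_tendsto hlim ?_
  filter_upwards [Ioo_mem_nhdsGT (zero_lt_one' ℝ)] with s hs
  exact key s hs.1 hs.2

lemma EGObjTaylor_eq (n : ℕ) (w tstar t : Fin n → ℝ) :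
    EGObjTaylor n w tstar t = EGObjTaylor n w tstar tstar
      - ∑ i, w i / tstar i * (t i - tstar i)
      + ∑ i, w i / (2 * (tstar i) ^ 2) * (t i - tstar i) ^ 2 := by
  simp only [EGObjTaylor, ← Finset.sum_sub_distrib, ← Finset.sum_add_distrib]
  exact Finset.sum_congr rfl fun i _ => by ring

/-- An optimal solution `(x⋆, t⋆)` of the Eisenberg–Gale program is also optimal for
the program with the objective replaced by its second-order Taylor expansion at `t⋆`;
moreover, the optimal `t`-component of the modified program is unique and equals `t⋆`. -/
theorem eg_taylor_modified_program (n m : ℕ) (u : Fin n → Fin m → ℝ) (w : Fin n → ℝ)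
    (hu : ∀ i j, 0 ≤ u i j)
    (hrow : ∀ i, ∃ j, 0 < u i j)
    (hcol : ∀ j, ∃ i, 0 < u i j)
    (hw : ∀ i, 0 < w i)
    (xstar : Fin n → Fin m → ℝ) (tstar : Fin n → ℝ)
    (hfeas : EGFeasible n m u xstar tstar)
    (hopt : ∀ x t, EGFeasible n m u x t → EGObj n w tstar ≤ EGObj n w t) :
    (∀ x t, EGFeasible n m u x t →
      EGObjTaylor n w tstar tstar ≤ EGObjTaylor n w tstar t) ∧
    (∀ x t, EGFeasible n m u x t →
      (∀ x' t', EGFeasible n m u x' t' → EGObjTaylor n w tstar t ≤ EGObjTaylor n w tstar t') →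
      t = tstar) := by
  have hts := hfeas.2.2.2
  have hquad : ∀ t : Fin n → ℝ, ∀ i ∈ Finset.univ,
      0 ≤ w i / (2 * (tstar i) ^ 2) * (t i - tstar i) ^ 2 := fun t i _ => by
    have := hw i
    positivity
  refine ⟨fun x t hx => ?_, fun x t hx hmin => ?_⟩
  · rw [EGObjTaylor_eq n w tstar t]
    have := EG_first_order hw hfeas hopt hx
    have := Finset.sum_nonneg (hquad t)
    linarith
  · have hle := hmin _ _ hfeas
    rw [EGObjTaylor_eq n w tstar t] at hle
    have := EG_first_order hw hfeas hopt hx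
    have hnn := Finset.sum_nonneg (hquad t)
    have hzero := (Finset.sum_eq_zero_iff_of_nonneg (hquad t)).mp (by linarith)
    funext i
    have hc : w i / (2 * (tstar i) ^ 2) ≠ 0 := by
      have := hw i
      have := hts i
      positivity
    have hi := (mul_eq_zero.mp (hzero i (Finset.mem_univ i))).resolve_left hc
    exact sub_eq_zero.mp (pow_eq_zero_iff two_ne_zero |>.mp hi)

end
end
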